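/- arXiv:2506.09019 — 2 statements merged into one kernel-verified Lean document; each statement's English description precedes it below -/
import Mathlib

section
/- Let k be a field of characteristic 2, let m ≥ 1, set d = 2m, and let e ≥ 0. Then (2^{m+1} − 1) · dim_k ( k[x_0,…,x_d] / (x_0^{2^e},…,x_d^{2^e}, x_0x_1 + x_2x_3 + ⋯ + x_{d−2}x_{d−1} + x_d³) ) = (2^{m+1} + 1) · 2^{d·e} − 2 · 2^{e·(m−1)}. In particular the Hilbert–Kunz function of the even-dimensional A_2 singularity in characteristic 2 is HK_e(S_{2,d}) = ((2^{m+1}+1)/(2^{m+1}−1))·2^{de} − (2/(2^{m+1}−1))·2^{e(m−1)}. -/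
open MvPolynomial

/-- The Hilbert–Kunz function of the hypersurface defined by `f` in `n` variables,
in characteristic `p`, at level `e`. -/
noncomputable def HKfun (k : Type*) [Field k] (n p e : ℕ)
    (f : MvPolynomial (Fin n) k) : ℕ :=
  Module.finrank k
    (MvPolynomial (Fin n) k ⧸
      Ideal.span
        (Set.range (fun i : Fin n => (X i : MvPolynomial (Fin n) k) ^ p ^ e) ∪ {f}))


section HKaux

/-- colon ideal -/
def cln {A : Type*} [CommRing A] (I : Ideal A) (x : A) : Ideal A :=
  Submodule.comap (LinearMap.mulLeft A x) I

theorem mem_cln {A : Type*} [CommRing A] {I : Ideal A} {x p : A} : p ∈ cln I x ↔ x * p ∈ I := Iff.rfl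

/-- colength -/
noncomputable def ell (k : Type*) [Field k] {A : Type*} [CommRing A] [Algebra k A] (I : Ideal A) : ℤ :=
  (Module.finrank k (A ⧸ I) : ℤ)

/-- finite colength -/
def Fn (k : Type*) [Field k] {A : Type*} [CommRing A] [Algebra k A] (I : Ideal A) : Prop :=
  Module.Finite k (A ⧸ I)

theorem Fn.mono {k : Type*} [Field k] {A : Type*} [CommRing A] [Algebra k A] {I J : Ideal A}
    (h : Fn k I) (hIJ : I ≤ J) : Fn k J := by
  unfold Fn at *
  exact Module.Finite.of_surjective (Ideal.Quotient.factorₐ k hIJ).toLinearMap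
    (Ideal.Quotient.factor_surjective hIJ)

theorem le_cln {A : Type*} [CommRing A] (I : Ideal A) (x : A) : I ≤ cln I x :=
  fun _ hp => I.mul_mem_left x hp

theorem ell_top (k : Type*) [Field k] {A : Type*} [CommRing A] [Algebra k A] :
    ell k (⊤ : Ideal A) = 0 := by
  unfold ell
  have : Subsingleton (A ⧸ (⊤ : Ideal A)) := Ideal.Quotient.subsingleton_iff.mpr rfl
  simp [Module.finrank_zero_of_subsingleton]

theorem Fn_top (k : Type*) [Field k] {A : Type*} [CommRing A] [Algebra k A] :
    Fn k (⊤ : Ideal A) := by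
  unfold Fn
  have : Subsingleton (A ⧸ (⊤ : Ideal A)) := Ideal.Quotient.subsingleton_iff.mpr rfl
  infer_instance

theorem ell_equiv {k : Type*} [Field k] {A : Type*} [CommRing A] [Algebra k A]
    {B : Type*} [CommRing B] [Algebra k B] (f : A ≃ₐ[k] B) (I : Ideal A) (J : Ideal B)
    (h : J = I.map (f : A →+* B)) : ell k I = ell k J ∧ (Fn k I → Fn k J) := by
  have e := (Ideal.quotientEquivAlg I J f h).toLinearEquiv
  refine ⟨?_, fun hI => ?_⟩
  · unfold ell; rw [e.finrank_eq]
  · unfold Fn at *; exact Module.Finite.equiv e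

theorem ell_mul {k : Type*} [Field k] {A : Type*} [CommRing A] [Algebra k A]
    (I : Ideal A) (x y : A) (h1 : Fn k (I ⊔ Ideal.span {x})) (h2 : Fn k (cln I x ⊔ Ideal.span {y})) :
    Fn k (I ⊔ Ideal.span {x * y}) ∧
    ell k (I ⊔ Ideal.span {x * y}) =
      ell k (I ⊔ Ideal.span {x}) + ell k (cln I x ⊔ Ideal.span {y}) := by
  set K := I ⊔ Ideal.span {x * y}
  set K1 := I ⊔ Ideal.span {x}
  set K2 := cln I x ⊔ Ideal.span {y}
  have hK : ∀ p, p ∈ K2 ↔ x * p ∈ K := by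
    intro p
    constructor
    · intro hp
      obtain ⟨a, ha, b, hb, rfl⟩ := Submodule.mem_sup.mp hp
      obtain ⟨c, rfl⟩ := Ideal.mem_span_singleton'.mp hb
      rw [mul_add]
      refine K.add_mem (Ideal.mem_sup_left ha) (Ideal.mem_sup_right ?_)
      exact Ideal.mem_span_singleton'.mpr ⟨c, by ring⟩
    · intro hp
      obtain ⟨a, ha, b, hb, hab⟩ := Submodule.mem_sup.mp hp
      obtain ⟨c, rfl⟩ := Ideal.mem_span_singleton'.mp hb
      have : p = (p - c * y) + c * y := by ring
      rw [this]
      refine K2.add_mem (Ideal.mem_sup_left ?_) (Ideal.mem_sup_right ?_)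
      · rw [mem_cln]
        have : x * (p - c * y) = a := by linear_combination -hab
        rwa [this]
      · exact Ideal.mem_span_singleton'.mpr ⟨c, rfl⟩
  have hle : K ≤ K1 := by
    refine sup_le_sup le_rfl ?_
    rw [Ideal.span_singleton_le_span_singleton]
    exact Dvd.intro y rfl
  let f : (A ⧸ K2) →ₗ[A] (A ⧸ K) := Submodule.mapQ K2 K (LinearMap.mulLeft A x)
    (fun p hp => (hK p).mp hp)
  let g : (A ⧸ K) →ₗ[A] (A ⧸ K1) := Submodule.mapQ K K1 LinearMap.id hle
  have hf : Function.Injective f := by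
    rw [← LinearMap.ker_eq_bot, LinearMap.ker_eq_bot']
    intro p hp
    obtain ⟨p, rfl⟩ := Submodule.Quotient.mk_surjective _ p
    have hp' : Submodule.Quotient.mk (p := K) (x * p) = 0 := hp
    rw [Submodule.Quotient.mk_eq_zero] at hp' ⊢
    exact (hK p).mpr hp'
  have hg : Function.Surjective g := by
    intro p
    obtain ⟨p, rfl⟩ := Submodule.Quotient.mk_surjective _ p
    exact ⟨Submodule.Quotient.mk p, rfl⟩
  have hex : LinearMap.ker g = LinearMap.range f := by
    ext p
    obtain ⟨p, rfl⟩ := Submodule.Quotient.mk_surjective _ p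
    constructor
    · intro hp
      have hp' : Submodule.Quotient.mk (p := K1) p = 0 := hp
      rw [Submodule.Quotient.mk_eq_zero] at hp'
      obtain ⟨a, ha, b, hb, rfl⟩ := Submodule.mem_sup.mp hp'
      obtain ⟨c, rfl⟩ := Ideal.mem_span_singleton'.mp hb
      refine ⟨Submodule.Quotient.mk c, ?_⟩
      change Submodule.Quotient.mk (p := K) (x * c) = _
      rw [Submodule.Quotient.eq]
      have : x * c - (a + c * x) = - a := by ring
      rw [this]
      exact K.neg_mem (Ideal.mem_sup_left ha)
    · rintro ⟨c, hc⟩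
      obtain ⟨c, rfl⟩ := Submodule.Quotient.mk_surjective _ c
      rw [← hc]
      change Submodule.Quotient.mk (p := K1) (x * c) = 0
      rw [Submodule.Quotient.mk_eq_zero]
      exact Ideal.mem_sup_right (Ideal.mem_span_singleton'.mpr ⟨c, by ring⟩)
  have h1' : Module.Finite k (A ⧸ K1) := h1
  have h2' : Module.Finite k (A ⧸ K2) := h2
  let f' := f.restrictScalars k
  let g' := g.restrictScalars k
  have hex' : LinearMap.ker g' = LinearMap.range f' := by
    ext p
    have := SetLike.ext_iff.mp hex p
    exact this
  have hfin : Module.Finite k (A ⧸ K) := by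
    have a1 : Module.Finite k (LinearMap.ker g') := by
      rw [hex']; infer_instance
    have a2 : Module.Finite k ((A ⧸ K) ⧸ LinearMap.ker g') :=
      Module.Finite.equiv (g'.quotKerEquivOfSurjective hg).symm
    exact Module.Finite.of_submodule_quotient (LinearMap.ker g')
  refine ⟨hfin, ?_⟩
  unfold ell
  have r := g'.finrank_range_add_finrank_ker
  have hg' : Function.Surjective g' := hg
  rw [hex', LinearMap.range_eq_top.mpr hg', finrank_top, LinearMap.finrank_range_of_inj (f := f') hf] at r
  rw [← r]; push_cast; rfl

theorem ell_add {k : Type*} [Field k] {A : Type*} [CommRing A] [Algebra k A]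
    (I : Ideal A) (x : A) (h : Fn k I) :
    ell k I = ell k (I ⊔ Ideal.span {x}) + ell k (cln I x) := by
  have := (ell_mul (k := k) I x 0 (h.mono le_sup_left) (h.mono ((le_cln I x).trans le_sup_left))).2
  simpa using this

/-! polynomial ideals -/

/-- The ideal `J + (X^a)`. -/
noncomputable def JX {B : Type*} [CommRing B] (J : Ideal B) (a : ℕ) : Ideal (Polynomial B) :=
  J.map Polynomial.C ⊔ Ideal.span {Polynomial.X ^ a}

theorem mem_JX {B : Type*} [CommRing B] {J : Ideal B} {a : ℕ} {p : Polynomial B} :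
    p ∈ JX J a ↔ ∀ i < a, p.coeff i ∈ J := by
  constructor
  · intro hp i hi
    obtain ⟨u, hu, v, hv, rfl⟩ := Submodule.mem_sup.mp hp
    rw [Ideal.mem_span_singleton, Polynomial.X_pow_dvd_iff] at hv
    rw [Polynomial.coeff_add, hv i hi, add_zero]
    exact Ideal.mem_map_C_iff.mp hu i
  · intro h
    set t : Polynomial B := ∑ i ∈ Finset.range a, Polynomial.monomial i (p.coeff i) with ht
    have hc : ∀ n, t.coeff n = if n < a then p.coeff n else 0 := by
      intro n
      simp [ht, Polynomial.finsetSum_coeff, Polynomial.coeff_monomial]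
    have : p = t + (p - t) := by ring
    rw [this]
    refine Ideal.add_mem _ (Ideal.mem_sup_left ?_) (Ideal.mem_sup_right ?_)
    · rw [Ideal.mem_map_C_iff]
      intro n; rw [hc]; split_ifs with hn
      · exact h n hn
      · exact J.zero_mem
    · rw [Ideal.mem_span_singleton, Polynomial.X_pow_dvd_iff]
      intro d hd
      rw [Polynomial.coeff_sub, hc, if_pos hd, sub_self]

theorem JX_one {k : Type*} [Field k] {B : Type*} [CommRing B] [Algebra k B] (J : Ideal B) :
    ell k (JX J 1) = ell k J ∧ (Fn k J → Fn k (JX J 1)) := by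
  let f : Polynomial B →ₗ[k] B ⧸ J :=
    ((Ideal.Quotient.mkₐ k J).toLinearMap).comp ((Polynomial.lcoeff B 0).restrictScalars k)
  have hf : Function.Surjective f := by
    intro b
    obtain ⟨b, rfl⟩ := Ideal.Quotient.mk_surjective b
    exact ⟨Polynomial.C b, by simp [f]⟩
  have hk : LinearMap.ker f = (JX J 1).restrictScalars k := by
    ext p
    simp [f, mem_JX, Ideal.Quotient.eq_zero_iff_mem]
  have e : (Polynomial B ⧸ JX J 1) ≃ₗ[k] B ⧸ J :=
    (Submodule.Quotient.restrictScalarsEquiv k (JX J 1)).symm.trans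
      ((Submodule.quotEquivOfEq _ _ hk.symm).trans (f.quotKerEquivOfSurjective hf))
  refine ⟨?_, fun hI => ?_⟩
  · unfold ell; rw [e.finrank_eq]
  · unfold Fn at *; exact Module.Finite.equiv e.symm

theorem cln_JX_X {B : Type*} [CommRing B] (J : Ideal B) (a b : ℕ) :
    cln (JX J (a + b)) (Polynomial.X ^ a) = JX J b := by
  ext p
  rw [mem_cln, mem_JX, mem_JX]
  constructor
  · intro h i hi
    have := h (i + a) (by omega)
    rwa [Polynomial.coeff_X_pow_mul] at this
  · intro h i hi
    rw [Polynomial.coeff_X_pow_mul']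
    split_ifs with h1
    · exact h _ (by omega)
    · exact J.zero_mem

theorem JX_zero {B : Type*} [CommRing B] (J : Ideal B) : JX J 0 = ⊤ := by
  rw [Ideal.eq_top_iff_one, mem_JX]; intro i hi; omega

theorem JX_mono {B : Type*} [CommRing B] (J : Ideal B) {a b : ℕ} (h : a ≤ b) : JX J b ≤ JX J a := by
  intro p; rw [mem_JX, mem_JX]; intro hp i hi; exact hp i (by omega)

theorem JX_sup_X {B : Type*} [CommRing B] (J : Ideal B) {a b : ℕ} (h : a ≤ b) :
    JX J b ⊔ Ideal.span {Polynomial.X ^ a} = JX J a := by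
  apply le_antisymm
  · exact sup_le (JX_mono J h) le_sup_right
  · refine sup_le (le_sup_left.trans le_sup_left) le_sup_right

theorem ell_JX {k : Type*} [Field k] {B : Type*} [CommRing B] [Algebra k B] (J : Ideal B)
    (hJ : Fn k J) (a : ℕ) : Fn k (JX J a) ∧ ell k (JX J a) = a * ell k J := by
  induction a with
  | zero => rw [JX_zero]; exact ⟨Fn_top k, by rw [ell_top]; simp⟩
  | succ a ih =>
    have h0 : cln (J.map Polynomial.C) (Polynomial.X : Polynomial B) = J.map Polynomial.C := by
      ext p
      rw [mem_cln, Ideal.mem_map_C_iff, Ideal.mem_map_C_iff]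
      constructor
      · intro h n
        have := h (n + 1)
        rwa [Polynomial.coeff_X_mul] at this
      · intro h n
        cases n with
        | zero => simp
        | succ n => rw [Polynomial.coeff_X_mul]; exact h n
    have h1 := JX_one (k := k) J
    have := ell_mul (k := k) (J.map Polynomial.C) (Polynomial.X : Polynomial B) (Polynomial.X ^ a)
      (by simpa [JX] using h1.2 hJ) (by rw [h0]; exact ih.1)
    rw [h0, ← pow_succ'] at this
    refine ⟨this.1, ?_⟩
    have h2 := this.2
    have h3 : ell k (Ideal.map Polynomial.C J ⊔ Ideal.span {(Polynomial.X : Polynomial B)}) = ell k J := by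
      rw [← h1.1]; simp [JX]
    rw [h3] at h2
    unfold JX at ih ⊢
    rw [h2, ih.2]; push_cast; ring

theorem cln_JX_C {B : Type*} [CommRing B] (J : Ideal B) (a : ℕ) (s : B) :
    cln (JX J a) (Polynomial.C s) = JX (cln J s) a := by
  ext p
  simp [mem_cln, mem_JX]

theorem JX_sup_C {B : Type*} [CommRing B] (J : Ideal B) (a : ℕ) (s : B) :
    JX J a ⊔ Ideal.span {Polynomial.C s} = JX (J ⊔ Ideal.span {s}) a := by
  unfold JX
  rw [Ideal.map_sup, Ideal.map_span, Set.image_singleton, sup_assoc, sup_assoc,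
    sup_comm (Ideal.span {Polynomial.X ^ a})]

end HKaux

section HKaux2

set_option linter.unusedSectionVars false

variable {k : Type*} [Field k] {B : Type*} [CommRing B] [Algebra k B] [CharP B 2]

/-- The shift `X ↦ X + S`. -/
noncomputable def shf (S : B) : Polynomial B ≃ₐ[B] Polynomial B := Polynomial.algEquivAevalXAddC S

theorem shf_X (S : B) : shf S Polynomial.X = Polynomial.X + Polynomial.C S := by
  simp [shf, Polynomial.algEquivAevalXAddC]

theorem shf_V (S : B) : shf S (Polynomial.X + Polynomial.C S) = Polynomial.X := by
  rw [map_add, shf_X]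
  have : shf S (Polynomial.C S) = Polynomial.C S := (shf S).commutes S
  rw [this, add_assoc, CharTwo.add_self_eq_zero, add_zero]

/-- The ideal `J + ((X+S)^a)`. -/
noncomputable def JV (J : Ideal B) (S : B) (a : ℕ) : Ideal (Polynomial B) :=
  J.map Polynomial.C ⊔ Ideal.span {(Polynomial.X + Polynomial.C S) ^ a}

theorem map_shf_C (J : Ideal B) (S : B) :
    (J.map (Polynomial.C : B →+* Polynomial B)).map ((shf S : Polynomial B ≃ₐ[B] Polynomial B) : Polynomial B →+* Polynomial B)
      = J.map Polynomial.C := by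
  rw [Ideal.map_map]
  congr 1
  ext b
  · exact congrArg (fun q => Polynomial.coeff q _) ((shf S).commutes b)

theorem map_shf_JX (J : Ideal B) (S : B) (a : ℕ) :
    (JX J a).map ((shf S : Polynomial B ≃ₐ[B] Polynomial B) : Polynomial B →+* Polynomial B) = JV J S a := by
  unfold JX JV
  rw [Ideal.map_sup, map_shf_C, Ideal.map_span, Set.image_singleton]
  simp [shf_X]

theorem map_shf_JV (J : Ideal B) (S : B) (a : ℕ) :
    (JV J S a).map ((shf S : Polynomial B ≃ₐ[B] Polynomial B) : Polynomial B →+* Polynomial B) = JX J a := by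
  unfold JX JV
  rw [Ideal.map_sup, map_shf_C, Ideal.map_span, Set.image_singleton]
  have := shf_V S
  simp only [RingHom.coe_coe, map_pow, this]

theorem mem_JV (J : Ideal B) (S : B) (a : ℕ) (p : Polynomial B) :
    p ∈ JV J S a ↔ shf S p ∈ JX J a := by
  constructor
  · intro h
    rw [← map_shf_JV J S a]
    exact Ideal.mem_map_of_mem _ h
  · intro h
    have h2 := Ideal.mem_map_of_mem ((shf S : Polynomial B ≃ₐ[B] Polynomial B) : Polynomial B →+* Polynomial B) h
    rw [map_shf_JX] at h2
    have : shf S (shf S p) = p := by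
      have : ((shf S : Polynomial B →ₐ[B] Polynomial B).comp (shf S : Polynomial B →ₐ[B] Polynomial B)) = AlgHom.id B _ := by
        apply Polynomial.algHom_ext
        change shf S (shf S Polynomial.X) = Polynomial.X
        rw [shf_X, shf_V]
      exact congrArg (fun f => f p) this
    simpa [this] using h2

/-- The ideal `J + (X^a, (X+S)^i)`. -/
noncomputable def gI (J : Ideal B) (S : B) (a i : ℕ) : Ideal (Polynomial B) :=
  JX J a ⊔ Ideal.span {(Polynomial.X + Polynomial.C S) ^ i}

variable (k) in
/-- dimension of the quotient by `gI` -/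
noncomputable def gg (J : Ideal B) (S : B) (a i : ℕ) : ℤ := ell k (gI J S a i)

variable (k) in
/-- dimension of the quotient by `J + S^n` -/
noncomputable def ph (J : Ideal B) (S : B) (n : ℕ) : ℤ := ell k (J ⊔ Ideal.span {S ^ n})

theorem Fn_gI {J : Ideal B} (hJ : Fn k J) (S : B) (a i : ℕ) : Fn k (gI J S a i) :=
  ((ell_JX J hJ a).1).mono le_sup_left

theorem gg_symm (J : Ideal B) (S : B) (a i : ℕ) : gg k J S a i = gg k J S i a := by
  refine (ell_equiv ((shf S).restrictScalars k) _ _ ?_).1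
  have : gI J S a i = JX J a ⊔ Ideal.span {(Polynomial.X + Polynomial.C S) ^ i} := rfl
  rw [this]
  change _ = Ideal.map ((shf S : Polynomial B ≃ₐ[B] Polynomial B) : Polynomial B →+* Polynomial B) _
  rw [Ideal.map_sup, map_shf_JX, Ideal.map_span, Set.image_singleton]
  have := shf_V S
  simp only [RingHom.coe_coe, map_pow, this]
  unfold gI JX JV
  rw [sup_assoc, sup_assoc, sup_comm (Ideal.span {Polynomial.X ^ i})]

theorem gg_one (J : Ideal B) (S : B) (i : ℕ) : gg k J S 1 i = ph k J S i := by
  unfold gg ph gI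
  rw [← (JX_one (k := k) (J ⊔ Ideal.span {S ^ i})).1, ← JX_sup_C]
  congr 1
  apply le_antisymm
  · refine sup_le le_sup_left ?_
    rw [Ideal.span_singleton_le_iff_mem]
    have h : (Polynomial.X + Polynomial.C S) ^ i - Polynomial.C (S ^ i) ∈ JX J 1 := by
      rw [mem_JX]
      intro j hj
      have : j = 0 := by omega
      subst this
      simp [Polynomial.coeff_zero_eq_eval_zero]
    have := Ideal.add_mem _ (Ideal.mem_sup_left (T := Ideal.span {Polynomial.C (S ^ i)}) h) (Ideal.mem_sup_right (Ideal.mem_span_singleton_self _))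
    simpa using this
  · refine sup_le le_sup_left ?_
    rw [Ideal.span_singleton_le_iff_mem]
    have h : Polynomial.C (S ^ i) - (Polynomial.X + Polynomial.C S) ^ i ∈ JX J 1 := by
      rw [mem_JX]
      intro j hj
      have : j = 0 := by omega
      subst this
      simp [Polynomial.coeff_zero_eq_eval_zero]
    have := Ideal.add_mem _ (Ideal.mem_sup_left (T := Ideal.span {(Polynomial.X + Polynomial.C S) ^ i}) h) (Ideal.mem_sup_right (Ideal.mem_span_singleton_self _))
    simpa using this

theorem gg_zero_right (J : Ideal B) (S : B) (a : ℕ) : gg k J S a 0 = 0 := by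
  unfold gg gI
  simp [ell_top]

/-- `(X+S)^(2^r t) = S^(2^r t)` modulo `X^(2^r)`. -/
theorem V_pow (S : B) (r t : ℕ) : (Polynomial.X : Polynomial B) ^ (2 ^ r) ∣
    (Polynomial.X + Polynomial.C S) ^ (2 ^ r * t) - Polynomial.C (S ^ (2 ^ r * t)) := by
  rw [pow_mul, add_pow_char_pow, pow_mul, map_pow, map_pow]
  have := sub_dvd_pow_sub_pow (Polynomial.X ^ 2 ^ r + Polynomial.C S ^ 2 ^ r) (Polynomial.C S ^ 2 ^ r) t
  rwa [add_sub_cancel_right] at this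

theorem gg_shift {J : Ideal B} (hJ : Fn k J) (S : B) (r t a i : ℕ) (ha : a ≤ 2 ^ r) :
    gg k J S a (2 ^ r * t + i) = a * ph k J S (2 ^ r * t) + gg k (cln J (S ^ (2 ^ r * t))) S a i := by
  set R := 2 ^ r * t
  have e1 : gI J S a (R + i) = JX J a ⊔ Ideal.span {Polynomial.C (S ^ R) * (Polynomial.X + Polynomial.C S) ^ i} := by
    have hd : (Polynomial.X + Polynomial.C S) ^ (R + i) - Polynomial.C (S ^ R) * (Polynomial.X + Polynomial.C S) ^ i ∈ JX J a := by
      rw [pow_add, ← sub_mul]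
      refine Ideal.mul_mem_right _ _ (Ideal.mem_sup_right ?_)
      rw [Ideal.mem_span_singleton]
      exact (pow_dvd_pow _ ha).trans (V_pow S r t)
    apply le_antisymm
    · refine sup_le le_sup_left ?_
      rw [Ideal.span_singleton_le_iff_mem]
      have := Ideal.add_mem _ (Ideal.mem_sup_left (T := Ideal.span {Polynomial.C (S ^ R) * (Polynomial.X + Polynomial.C S) ^ i}) hd) (Ideal.mem_sup_right (Ideal.mem_span_singleton_self _))
      rwa [sub_add_cancel] at this
    · refine sup_le le_sup_left ?_
      rw [Ideal.span_singleton_le_iff_mem]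
      have := Ideal.sub_mem _ (Ideal.mem_sup_right (S := JX J a) (Ideal.mem_span_singleton_self ((Polynomial.X + Polynomial.C S) ^ (R+i)))) (Ideal.mem_sup_left hd)
      rwa [sub_sub_cancel] at this
  have hJ1 : Fn k (J ⊔ Ideal.span {S ^ R}) := hJ.mono le_sup_left
  have hJ2 : Fn k (cln J (S ^ R)) := hJ.mono (le_cln _ _)
  have := (ell_mul (k := k) (JX J a) (Polynomial.C (S ^ R)) ((Polynomial.X + Polynomial.C S) ^ i)
    (by rw [JX_sup_C]; exact (ell_JX _ hJ1 a).1)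
    (by rw [cln_JX_C]; exact Fn_gI hJ2 S a i)).2
  unfold gg
  rw [e1, this, JX_sup_C, cln_JX_C, (ell_JX _ hJ1 a).2]
  rfl

theorem ph_shift {J : Ideal B} (hJ : Fn k J) (S : B) (R i : ℕ) :
    ph k J S (R + i) = ph k J S R + ph k (cln J (S ^ R)) S i := by
  unfold ph
  rw [pow_add]
  exact (ell_mul (k := k) J (S ^ R) (S ^ i) (hJ.mono le_sup_left)
    (hJ.mono ((le_cln _ _).trans le_sup_left))).2

theorem ph_low (J : Ideal B) (S : B) {R i : ℕ} (h : i ≤ R) :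
    ph k (J ⊔ Ideal.span {S ^ R}) S i = ph k J S i := by
  unfold ph
  congr 1
  rw [sup_assoc]
  congr 1
  rw [sup_eq_right, Ideal.span_singleton_le_span_singleton]
  exact pow_dvd_pow S h

theorem gg_low (J : Ideal B) (S : B) {r a i : ℕ} (ha : a ≤ 2 ^ r) (h : i ≤ 2 ^ r) :
    gg k (J ⊔ Ideal.span {S ^ 2 ^ r}) S a i = gg k J S a i := by
  unfold gg
  congr 1
  unfold gI
  rw [← JX_sup_C]
  apply le_antisymm
  · refine sup_le (sup_le le_sup_left ?_) le_sup_right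
    rw [Ideal.span_singleton_le_iff_mem]
    have h1 : (Polynomial.X + Polynomial.C S) ^ (2 ^ r) - Polynomial.C (S ^ 2 ^ r) ∈ JX J a := by
      have := V_pow S r 1
      rw [mul_one] at this
      exact Ideal.mem_sup_right (Ideal.mem_span_singleton.mpr ((pow_dvd_pow _ ha).trans this))
    have h2 : (Polynomial.X + Polynomial.C S) ^ (2 ^ r) ∈ Ideal.span {(Polynomial.X + Polynomial.C S) ^ i} :=
      Ideal.mem_span_singleton.mpr (pow_dvd_pow _ h)
    have := Ideal.sub_mem _ (Ideal.mem_sup_right (S := JX J a) h2) (Ideal.mem_sup_left h1)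
    rwa [sub_sub_cancel] at this
  · exact sup_le (le_sup_left.trans le_sup_left) le_sup_right

theorem JX_eq_JV {J : Ideal B} {S : B} {r : ℕ} (hS : S ^ 2 ^ r ∈ J) : JX J (2 ^ r) = JV J S (2 ^ r) := by
  have hc : Polynomial.C (S ^ 2 ^ r) ∈ J.map (Polynomial.C : B →+* Polynomial B) := Ideal.mem_map_of_mem _ hS
  unfold JX JV
  rw [add_pow_char_pow, ← map_pow]
  apply le_antisymm
  · refine sup_le le_sup_left ?_
    rw [Ideal.span_singleton_le_iff_mem]
    have := Ideal.sub_mem _ (Ideal.mem_sup_right (S := J.map (Polynomial.C : B →+* Polynomial B)) (Ideal.mem_span_singleton_self (Polynomial.X ^ 2 ^ r + Polynomial.C (S ^ 2 ^ r)))) (Ideal.mem_sup_left hc)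
    rwa [add_sub_cancel_right] at this
  · refine sup_le le_sup_left ?_
    rw [Ideal.span_singleton_le_iff_mem]
    exact Ideal.add_mem _ (Ideal.mem_sup_right (Ideal.mem_span_singleton_self _)) (Ideal.mem_sup_left hc)

theorem cln_JV (J : Ideal B) (S : B) (a b : ℕ) :
    cln (JV J S (a + b)) ((Polynomial.X + Polynomial.C S) ^ a) = JV J S b := by
  ext p
  rw [mem_cln, mem_JV, mem_JV, map_mul, map_pow, shf_V, ← mem_cln, cln_JX_X]

theorem ell_JV {J : Ideal B} (hJ : Fn k J) (S : B) (a : ℕ) :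
    ell k (JV J S a) = a * ell k J := by
  rw [← (ell_JX J hJ a).2]
  exact (ell_equiv ((shf S).restrictScalars k) _ _ (map_shf_JV J S a).symm).1

theorem JV_sup (J : Ideal B) (S : B) {a b : ℕ} (h : a ≤ b) :
    JV J S b ⊔ Ideal.span {(Polynomial.X + Polynomial.C S) ^ a} = JV J S a := by
  unfold JV
  rw [sup_assoc]
  congr 1
  rw [sup_eq_right, Ideal.span_singleton_le_span_singleton]
  exact pow_dvd_pow _ h

theorem gg_full {J : Ideal B} (hJ : Fn k J) {S : B} {r : ℕ} (hS : S ^ 2 ^ r ∈ J) {i : ℕ} (hi : i ≤ 2 ^ r) :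
    gg k J S (2 ^ r) i = i * ell k J := by
  unfold gg gI
  rw [JX_eq_JV hS, JV_sup J S hi, ell_JV hJ]

theorem cln_comm {A : Type*} [CommRing A] (I : Ideal A) (x y : A) : cln (cln I x) y = cln (cln I y) x := by
  ext p; simp only [mem_cln, mul_left_comm]

theorem gg_dual {J : Ideal B} (hJ : Fn k J) {S : B} {r : ℕ} (hS : S ^ 2 ^ r ∈ J) {a i : ℕ}
    (ha : a ≤ 2 ^ r) (hi : i ≤ 2 ^ r) :
    gg k J S (2 ^ r - a) (2 ^ r - i) = (2 ^ r - a - i) * ell k J + gg k J S a i := by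
  have e1 : cln (JX J (2 ^ r)) (Polynomial.X ^ a) = JX J (2 ^ r - a) := by
    have := cln_JX_X J a (2 ^ r - a)
    rwa [Nat.add_sub_cancel' ha] at this
  have e2 : cln (JX J (2 ^ r)) ((Polynomial.X + Polynomial.C S) ^ (2 ^ r - i)) = JV J S i := by
    have := cln_JV J S (2 ^ r - i) i
    rwa [Nat.sub_add_cancel hi, ← JX_eq_JV hS] at this
  have h1 := ell_add (k := k) (JX J (2 ^ r - a)) ((Polynomial.X + Polynomial.C S) ^ (2 ^ r - i))
    (ell_JX J hJ _).1
  have hV : Fn k (JV J S i) := (ell_equiv ((shf S).restrictScalars k) _ _ (map_shf_JX J S i).symm).2 (ell_JX J hJ i).1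
  have h2 := ell_add (k := k) (JV J S i) (Polynomial.X ^ a) hV
  have e3 : cln (JX J (2 ^ r - a)) ((Polynomial.X + Polynomial.C S) ^ (2 ^ r - i)) = cln (JV J S i) (Polynomial.X ^ a) := by
    rw [← e1, cln_comm, e2]
  have e4 : JV J S i ⊔ Ideal.span {Polynomial.X ^ a} = gI J S a i := by
    unfold JV gI JX
    rw [sup_assoc, sup_assoc, sup_comm (Ideal.span {Polynomial.X ^ a})]
  rw [e4, ell_JV hJ] at h2
  rw [e3, (ell_JX J hJ _).2] at h1
  push_cast [Nat.cast_sub ha] at h1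
  change _ = gg k J S (2 ^ r - a) (2 ^ r - i) + _ at h1
  change _ = gg k J S a i + _ at h2
  linear_combination h2 - h1

end HKaux2

section HKaux3

set_option linter.unusedSectionVars false

/-- alternating sum of differences -/
def alt (F : ℕ → ℤ) (Q : ℕ) : ℤ := ∑ i ∈ Finset.range Q, (-1) ^ i * (F (i + 1) - F i)

theorem alt_congr {F G : ℕ → ℤ} {Q : ℕ} (h : ∀ i ≤ Q, F i = G i) : alt F Q = alt G Q := by
  unfold alt
  refine Finset.sum_congr rfl fun i hi => ?_
  rw [Finset.mem_range] at hi
  rw [h i hi.le, h (i + 1) hi]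

theorem alt_split (F : ℕ → ℤ) (P R : ℕ) : alt F (P + R) = alt F P + (-1) ^ P * alt (fun i => F (P + i)) R := by
  unfold alt
  rw [Finset.sum_range_add, Finset.mul_sum]
  congr 1
  refine Finset.sum_congr rfl fun i _ => ?_
  rw [pow_add, add_assoc, mul_assoc]

theorem alt_const (F : ℕ → ℤ) (c : ℤ) (Q : ℕ) : alt (fun i => c + F i) Q = alt F Q := by
  unfold alt
  refine Finset.sum_congr rfl fun i _ => ?_
  ring

theorem alt_add (F G : ℕ → ℤ) (Q : ℕ) : alt (fun i => F i + G i) Q = alt F Q + alt G Q := by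
  unfold alt
  rw [← Finset.sum_add_distrib]
  refine Finset.sum_congr rfl fun i _ => ?_
  ring

theorem alt_smul (F : ℕ → ℤ) (c : ℤ) (Q : ℕ) : alt (fun i => c * F i) Q = c * alt F Q := by
  unfold alt
  rw [Finset.mul_sum]
  refine Finset.sum_congr rfl fun i _ => ?_
  ring

theorem alt_sum {ι : Type*} (s : Finset ι) (F : ι → ℕ → ℤ) (Q : ℕ) :
    alt (fun i => ∑ a ∈ s, F a i) Q = ∑ a ∈ s, alt (F a) Q := by
  unfold alt
  rw [Finset.sum_comm]
  refine Finset.sum_congr rfl fun i _ => ?_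
  rw [← Finset.sum_sub_distrib, Finset.mul_sum]

theorem alt_lin (c : ℤ) {Q : ℕ} (hQ : Even Q) : alt (fun i => i * c) Q = 0 := by
  obtain ⟨t, rfl⟩ := hQ
  rw [← two_mul]
  induction t with
  | zero => simp [alt]
  | succ t ih =>
    rw [mul_add, mul_one, alt_split, ih]
    unfold alt
    rw [show (2 : ℕ) = 1 + 1 from rfl, Finset.sum_range_succ, Finset.sum_range_one]
    push_cast
    ring

theorem alt_dual (G : ℕ → ℤ) {Q : ℕ} (hQ : Even Q) : alt (fun i => G (Q - i)) Q = alt G Q := by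
  unfold alt
  rw [← Finset.sum_range_reflect]
  refine Finset.sum_congr rfl fun i hi => ?_
  rw [Finset.mem_range] at hi
  have h1 : Q - (Q - 1 - i + 1) = i := by omega
  have h2 : Q - (Q - 1 - i) = i + 1 := by omega
  have h3 : (-1 : ℤ) ^ (Q - 1 - i) = - (-1) ^ i := by
    have : (-1 : ℤ) ^ (Q - 1 - i) * (-1) ^ (i + 1) = 1 := by
      rw [← pow_add, show Q - 1 - i + (i + 1) = Q by omega, hQ.neg_one_pow]
    rcases neg_one_pow_eq_or ℤ i with h | h <;> rw [pow_succ, h] at this <;> rw [h] <;> linarith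
  beta_reduce
  rw [h1, h2, h3]
  ring

variable {k : Type*} [Field k] {B : Type*} [CommRing B] [Algebra k B] [CharP B 2]

theorem two_pow_even {r : ℕ} (hr : 1 ≤ r) : Even (2 ^ r) := by
  rw [Nat.even_pow]; exact ⟨even_two, by omega⟩

theorem alt_gg_full {J : Ideal B} (hJ : Fn k J) {S : B} {r : ℕ} (hr : 1 ≤ r) (hS : S ^ 2 ^ r ∈ J) :
    alt (gg k J S (2 ^ r)) (2 ^ r) = 0 := by
  rw [alt_congr (fun i hi => gg_full hJ hS hi), alt_lin _ (two_pow_even hr)]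

theorem alt_gg (r : ℕ) (hr : 1 ≤ r) : ∀ (J : Ideal B) (_ : Fn k J) (S : B) (_ : S ^ 2 ^ r ∈ J) (a : ℕ)
    (_ : 1 ≤ a) (_ : a ≤ 2 ^ r),
    alt (gg k J S a) (2 ^ r) = if Odd a then alt (ph k J S) (2 ^ r) else 0 := by
  induction r, hr using Nat.le_induction with
  | base =>
    intro J hJ S hS a h1 h2
    have : a = 1 ∨ a = 2 := by omega
    rcases this with rfl | rfl
    · simp only [odd_one, if_true]
      exact alt_congr fun i _ => gg_one J S i
    · have := alt_gg_full hJ le_rfl hS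
      rw [if_neg (by decide)]
      exact this
  | succ r hr ih =>
    intro J hJ S hS
    have key : ∀ a, 1 ≤ a → a ≤ 2 ^ r → alt (gg k J S a) (2 ^ (r + 1)) = if Odd a then alt (ph k J S) (2 ^ (r + 1)) else 0 := by
      intro a h1 h2
      have hp : (2 : ℕ) ^ (r + 1) = 2 ^ r + 2 ^ r := by rw [pow_succ]; ring
      rw [hp, alt_split, alt_split]
      have hJ2 : Fn k (cln J (S ^ 2 ^ r)) := hJ.mono (le_cln _ _)
      have hJ1 : Fn k (J ⊔ Ideal.span {S ^ 2 ^ r}) := hJ.mono le_sup_left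
      have g2 := ih _ hJ2 S (by rw [mem_cln, ← pow_add, ← hp]; exact hS) a h1 h2
      have g1 := ih _ hJ1 S (Ideal.mem_sup_right (Ideal.mem_span_singleton_self _)) a h1 h2
      rw [alt_congr (fun i hi => gg_low J S h2 hi), alt_congr (fun i hi => ph_low J S hi)] at g1
      have e2 : alt (fun i => gg k J S a (2 ^ r + i)) (2 ^ r) = alt (gg k (cln J (S ^ 2 ^ r)) S a) (2 ^ r) := by
        rw [← alt_const (gg k (cln J (S ^ 2 ^ r)) S a) (a * ph k J S (2 ^ r))]
        refine alt_congr fun i _ => ?_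
        have := gg_shift hJ S r 1 a i h2
        rwa [mul_one] at this
      have e3 : alt (fun i => ph k J S (2 ^ r + i)) (2 ^ r) = alt (ph k (cln J (S ^ 2 ^ r)) S) (2 ^ r) := by
        rw [← alt_const (ph k (cln J (S ^ 2 ^ r)) S) (ph k J S (2 ^ r))]
        exact alt_congr fun i _ => ph_shift hJ S _ _
      rw [e2, e3, g1, g2]
      split_ifs <;> simp
    intro a h1 h2
    by_cases h3 : a ≤ 2 ^ r
    · exact key a h1 h3
    have hp : (2 : ℕ) ^ (r + 1) = 2 ^ r + 2 ^ r := by rw [pow_succ]; ring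
    rcases eq_or_lt_of_le h2 with rfl | h4
    · rw [alt_gg_full hJ (by omega) hS, if_neg]
      rw [Nat.not_odd_iff_even]
      exact two_pow_even (by omega)
    · have hev : Even (2 ^ (r + 1)) := two_pow_even (by omega)
      have := key (2 ^ (r + 1) - a) (by omega) (by omega)
      have hpar : Odd (2 ^ (r + 1) - a) ↔ Odd a := by
        rw [Nat.odd_sub h2]
        rw [← Nat.not_even_iff_odd, ← Nat.not_even_iff_odd (n := a)]
        tauto
      simp only [hpar] at this
      rw [← this, ← alt_dual (gg k J S (2 ^ (r + 1) - a)) hev]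
      have : alt (fun i => gg k J S a i) (2 ^ (r + 1)) =
          alt (fun i => (a - 2 ^ (r + 1)) * ell k J + ((i : ℤ) * ell k J + gg k J S (2 ^ (r + 1) - a) (2 ^ (r + 1) - i))) (2 ^ (r + 1)) := by
        refine alt_congr fun i hi => ?_
        have := gg_dual hJ hS (a := 2 ^ (r + 1) - a) (i := 2 ^ (r + 1) - i) (by omega) (by omega)
        rw [Nat.sub_sub_self h2, Nat.sub_sub_self hi] at this
        rw [this, Nat.cast_sub h2, Nat.cast_sub hi]
        push_cast
        ring
      rw [alt_const, alt_add, alt_lin _ hev, zero_add] at this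
      exact this

theorem gg_two_even {J : Ideal B} (hJ : Fn k J) (S : B) (t : ℕ) :
    gg k J S 2 (2 * t) = 2 * ph k J S (2 * t) := by
  have := gg_shift hJ S 1 t 2 0 (by norm_num)
  rw [gg_zero_right] at this
  simpa using this

theorem gg_two_odd {J : Ideal B} (hJ : Fn k J) (S : B) (t : ℕ) :
    gg k J S 2 (2 * t + 1) = ph k J S (2 * t) + ph k J S (2 * t + 2) := by
  have := gg_shift hJ S 1 t 2 1 (by norm_num)
  rw [gg_symm, gg_symm _ S 2 1, gg_one, pow_one] at this
  rw [ph_shift hJ S (2 * t) 2]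
  rw [gg_symm, this]
  push_cast
  ring

/-- hypothesis package of the pair step -/
theorem pair_alt {J : Ideal B} (hJ : Fn k J) {S : B} {r : ℕ} (hr : 1 ≤ r) (hS : S ^ 2 ^ r ∈ J)
    (F : ℕ → ℤ) (hF : ∀ n, F n = gg k J S (2 ^ r) n + 2 * ∑ a ∈ Finset.Ico 1 (2 ^ r), gg k J S a n) :
    alt F (2 ^ r) = 2 ^ r * alt (ph k J S) (2 ^ r) ∧ 2 * F 1 - F 2 = 2 * alt (ph k J S) (2 ^ r) := by
  have hc : ∀ t : ℕ, ∀ c : ℤ, 2 * ∑ a ∈ Finset.Ico 1 (2 * (t + 1)), (if Odd a then c else 0) = 2 * (t + 1) * c := by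
    intro t c
    induction t with
    | zero => simp
    | succ t ih =>
      rw [show 2 * (t + 1 + 1) = 2 * (t + 1) + 1 + 1 by ring, Finset.sum_Ico_succ_top (by omega),
        Finset.sum_Ico_succ_top (by omega), mul_add, mul_add, ih]
      rw [if_neg (by simp), if_pos (by simp)]
      push_cast
      ring
  obtain ⟨t, ht⟩ : ∃ t, 2 ^ r = 2 * (t + 1) := by
    obtain ⟨t, ht⟩ := (two_pow_even hr).two_dvd
    have : 0 < 2 ^ r := by positivity
    exact ⟨t - 1, by omega⟩
  constructor
  · rw [alt_congr (fun n _ => hF n), alt_add, alt_gg_full hJ hr hS, zero_add, alt_smul, alt_sum]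
    have h2 : (2 : ℤ) ^ r = 2 * (t + 1) := by exact_mod_cast ht
    rw [h2, ← hc, ← ht]
    congr 1
    refine Finset.sum_congr rfl (fun a ha => ?_)
    rw [Finset.mem_Ico] at ha
    exact alt_gg r hr J hJ S hS a ha.1 ha.2.le
  · have h0 : 1 < 2 ^ r := by omega
    have e : 2 * gg k J S (2 ^ r) 1 = gg k J S (2 ^ r) 2 := by
      rw [gg_full hJ hS (by omega), gg_full hJ hS (by omega)]
      push_cast; ring
    have main : ∀ s : ℕ, ∑ a ∈ Finset.Ico 1 (2 * (s + 1)), (2 * gg k J S a 1 - gg k J S a 2)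
       = alt (ph k J S) (2 * (s + 1)) := by
      have f1 : ∀ a, gg k J S a 1 = ph k J S a := fun a => by rw [gg_symm, gg_one]
      have f2 : ∀ t, gg k J S (2 * t) 2 = 2 * ph k J S (2 * t) := fun t => by
        rw [gg_symm, gg_two_even hJ]
      have f3 : ∀ t, gg k J S (2 * t + 1) 2 = ph k J S (2 * t) + ph k J S (2 * t + 2) := fun t => by
        rw [gg_symm, gg_two_odd hJ]
      intro s
      induction s with
      | zero =>
        have := f3 0
        simp only [mul_zero, zero_add] at this
        simp [alt, Finset.sum_range_succ, f1, this]
        ring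
      | succ s ih =>
        rw [show 2 * (s + 1 + 1) = 2 * (s + 1) + 1 + 1 by ring, Finset.sum_Ico_succ_top (by omega),
          Finset.sum_Ico_succ_top (by omega), ih, f1, f1, f2, f3]
        unfold alt
        rw [Finset.sum_range_succ, Finset.sum_range_succ]
        rw [pow_succ (-1 : ℤ) (2 * (s + 1)), pow_mul]
        norm_num
        ring
    rw [ht, ← main, ← ht, Finset.sum_sub_distrib, ← Finset.mul_sum, hF, hF]
    linear_combination e

end HKaux3

section HKaux4

set_option linter.unusedSectionVars false

theorem ell_dsum {k : Type*} [Field k] {A C : Type*} [CommRing A] [Algebra k A] [CommRing C] [Algebra k C]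
    {T : Type*} [Fintype T] [DecidableEq T] (K : Ideal C) (I : T → Ideal A)
    (p : T → C →ₗ[k] A) (j : T → A →ₗ[k] C)
    (hp : ∀ c, ∀ x ∈ K, p c x ∈ I c) (hj : ∀ c, ∀ x ∈ I c, j c x ∈ K)
    (hpj : ∀ c c' a, p c' (j c a) = if c' = c then a else 0)
    (hs : ∀ N : Submodule k C, K.restrictScalars k ≤ N → (∀ c a, j c a ∈ N) → N = ⊤)
    (hF : ∀ c, Fn k (I c)) :
    Fn k K ∧ ell k K = ∑ c, ell k (I c) := by
  have hjl : ∀ c, ∃ f : (A ⧸ I c) →ₗ[k] (C ⧸ K), ∀ a, f (Ideal.Quotient.mk (I c) a) = Ideal.Quotient.mk K (j c a) :=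
    fun c => ⟨((I c).restrictScalars k).mapQ (K.restrictScalars k) (j c) (hj c), fun a => rfl⟩
  choose jl hjl using hjl
  let Φ : (∀ c, A ⧸ I c) →ₗ[k] C ⧸ K :=
    ∑ c, (jl c).comp (LinearMap.proj c)
  have hΦ : ∀ v, Φ v = ∑ c, jl c (v c) := by
    intro v
    simp [Φ, LinearMap.sum_apply]
  let Ψ : (C ⧸ K) →ₗ[k] (∀ c, A ⧸ I c) :=
    LinearMap.pi fun c => (K.restrictScalars k).mapQ ((I c).restrictScalars k) (p c) (hp c)
  have hΨΦ : ∀ v, Ψ (Φ v) = v := by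
    intro v
    obtain ⟨a, rfl⟩ : ∃ a : T → A, v = fun c => Ideal.Quotient.mk (I c) (a c) := by
      choose a ha using fun c => Ideal.Quotient.mk_surjective (v c)
      exact ⟨a, by funext c; exact (ha c).symm⟩
    have h1 : Φ (fun c => Ideal.Quotient.mk (I c) (a c)) = Ideal.Quotient.mk K (∑ c, j c (a c)) := by
      rw [hΦ, map_sum]
      exact Finset.sum_congr rfl fun c _ => hjl c _
    rw [h1]
    funext c'
    have h2 : Ψ (Ideal.Quotient.mk K (∑ c, j c (a c))) c' = Ideal.Quotient.mk (I c') (p c' (∑ c, j c (a c))) := rfl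
    rw [h2]
    simp [hpj]
  have hsurj : Function.Surjective Φ := by
    have := hs ((LinearMap.range Φ).comap (Ideal.Quotient.mkₐ k K).toLinearMap) ?_ ?_
    · intro y
      obtain ⟨y, rfl⟩ := Ideal.Quotient.mk_surjective y
      have h : y ∈ (⊤ : Submodule k C) := trivial
      rw [← this] at h
      exact h
    · intro x hx
      rw [Submodule.mem_comap]
      have : (Ideal.Quotient.mkₐ k K).toLinearMap x = 0 := Ideal.Quotient.eq_zero_iff_mem.mpr hx
      rw [this]
      exact zero_mem _
    · intro c a
      rw [Submodule.mem_comap]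
      refine ⟨Pi.single c (Ideal.Quotient.mk (I c) a), ?_⟩
      rw [hΦ, Finset.sum_eq_single c]
      · rw [Pi.single_eq_same, hjl]
        rfl
      · intro b _ hb
        rw [Pi.single_eq_of_ne hb, map_zero]
      · simp
  let E : (∀ c, A ⧸ I c) ≃ₗ[k] C ⧸ K :=
    LinearEquiv.ofBijective Φ ⟨Function.LeftInverse.injective hΨΦ, hsurj⟩
  have : ∀ c, Module.Finite k (A ⧸ I c) := hF
  refine ⟨Module.Finite.equiv E, ?_⟩
  unfold ell
  rw [← E.finrank_eq, Module.finrank_pi_fintype]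
  push_cast
  rfl

variable {k : Type*} [Field k] {B : Type*} [CommRing B] [Algebra k B]

variable (B) in
/-- `T ↦ xy` -/
noncomputable def thet : Polynomial B →ₐ[B] Polynomial (Polynomial B) :=
  Polynomial.aeval (Polynomial.C Polynomial.X * Polynomial.X)

theorem thet_coeff (a : Polynomial B) (i j : ℕ) :
    ((thet B a).coeff j).coeff i = if i = j then a.coeff i else 0 := by
  induction a using Polynomial.induction_on' with
  | add p q hp hq => simp only [map_add, Polynomial.coeff_add, hp, hq]; split_ifs <;> simp
  | monomial n b =>
    unfold thet
    rw [Polynomial.aeval_monomial, mul_pow, ← map_pow]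
    have : (algebraMap B (Polynomial (Polynomial B))) b = Polynomial.C (Polynomial.C b) := rfl
    rw [this, Polynomial.coeff_C_mul, Polynomial.coeff_C_mul, Polynomial.coeff_C_mul, Polynomial.coeff_X_pow,
      Polynomial.coeff_monomial]
    by_cases h : j = n
    · subst h; simp [Polynomial.coeff_X_pow]; grind
    · simp [h]; grind

variable (k) in
/-- the inclusion `a ↦ x^c y^d a(xy)` -/
noncomputable def inc (c d : ℕ) : Polynomial B →ₗ[k] Polynomial (Polynomial B) :=
  (LinearMap.mulLeft k (Polynomial.X ^ d * Polynomial.C (Polynomial.X ^ c))).comp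
    ((thet B).restrictScalars k).toLinearMap

theorem inc_apply (c d : ℕ) (a : Polynomial B) :
    inc k c d a = Polynomial.X ^ d * Polynomial.C (Polynomial.X ^ c) * thet B a := rfl

theorem inc_coeff (c d : ℕ) (a : Polynomial B) (i j : ℕ) :
    ((inc k c d a).coeff j).coeff i = if d ≤ j ∧ c ≤ i ∧ i - c = j - d then a.coeff (i - c) else 0 := by
  rw [inc_apply, mul_assoc, Polynomial.coeff_X_pow_mul']
  by_cases h : d ≤ j
  · rw [if_pos h, Polynomial.coeff_C_mul, Polynomial.coeff_X_pow_mul']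
    by_cases h2 : c ≤ i
    · rw [if_pos h2, thet_coeff]; simp [h, h2]
    · simp [h2]
  · simp [h]

/-- the projection as a function -/
noncomputable def prj0 (c d : ℕ) (p : Polynomial (Polynomial B)) : Polynomial B :=
  ∑ t ∈ Finset.range (p.natDegree + 1), Polynomial.monomial t ((p.coeff (t + d)).coeff (t + c))

theorem prj0_coeff (c d : ℕ) (p : Polynomial (Polynomial B)) (t : ℕ) :
    (prj0 c d p).coeff t = (p.coeff (t + d)).coeff (t + c) := by
  unfold prj0
  rw [Polynomial.finsetSum_coeff]
  simp only [Polynomial.coeff_monomial]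
  rw [Finset.sum_ite_eq']
  split_ifs with h
  · rfl
  · rw [Finset.mem_range] at h
    rw [Polynomial.coeff_eq_zero_of_natDegree_lt (p := p) (by omega), Polynomial.coeff_zero]

variable (k) in
/-- the projection -/
noncomputable def prj (c d : ℕ) : Polynomial (Polynomial B) →ₗ[k] Polynomial B where
  toFun := prj0 c d
  map_add' p q := by ext t; simp [prj0_coeff]
  map_smul' b p := by ext t; simp [prj0_coeff]

theorem prj_coeff (c d : ℕ) (p : Polynomial (Polynomial B)) (t : ℕ) :
    (prj k c d p).coeff t = (p.coeff (t + d)).coeff (t + c) := prj0_coeff c d p t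

/-- `S + xy` -/
noncomputable def nS (S : B) : Polynomial (Polynomial B) :=
  Polynomial.C (Polynomial.C S) + Polynomial.C Polynomial.X * Polynomial.X

theorem prj_nS (S : B) {c d : ℕ} (hcd : c = 0 ∨ d = 0) (p : Polynomial (Polynomial B)) :
    prj k c d (nS S * p) = (Polynomial.X + Polynomial.C S) * prj k c d p := by
  ext t
  rw [prj_coeff, nS, add_mul, add_mul, Polynomial.coeff_add, Polynomial.coeff_add, Polynomial.coeff_C_mul,
    Polynomial.coeff_C_mul, Polynomial.coeff_add, Polynomial.coeff_C_mul, prj_coeff, add_comm]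
  congr 1
  rw [mul_assoc, Polynomial.coeff_C_mul]
  cases t with
  | zero =>
    rw [Polynomial.mul_coeff_zero, Polynomial.coeff_X_zero, zero_mul, zero_add, zero_add]
    rcases hcd with rfl | rfl
    · rw [Polynomial.mul_coeff_zero, Polynomial.coeff_X_zero, zero_mul]
    · rw [Polynomial.mul_coeff_zero, Polynomial.coeff_X_zero, zero_mul, mul_zero, Polynomial.coeff_zero]
  | succ t =>
    rw [show t + 1 + d = t + d + 1 by ring, show t + 1 + c = t + c + 1 by ring, Polynomial.coeff_X_mul,
      Polynomial.coeff_X_mul, Polynomial.coeff_X_mul, prj_coeff]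

theorem prj_nS_pow (S : B) {c d : ℕ} (hcd : c = 0 ∨ d = 0) (n : ℕ) (p : Polynomial (Polynomial B)) :
    prj k c d (nS S ^ n * p) = (Polynomial.X + Polynomial.C S) ^ n * prj k c d p := by
  induction n generalizing p with
  | zero => simp
  | succ n ih => rw [pow_succ, mul_assoc, ih, prj_nS S hcd, pow_succ, mul_assoc]

theorem thet_V (S : B) : thet B (Polynomial.X + Polynomial.C S) = nS S := by
  unfold thet nS
  rw [map_add, Polynomial.aeval_X, Polynomial.aeval_C, add_comm]
  rfl

/-- the big ideal -/
noncomputable def JJ (J : Ideal B) (Q : ℕ) : Ideal (Polynomial (Polynomial B)) := JX (JX J Q) Q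

theorem mem_JJ {J : Ideal B} {Q : ℕ} {p : Polynomial (Polynomial B)} :
    p ∈ JJ J Q ↔ ∀ j < Q, ∀ i < Q, (p.coeff j).coeff i ∈ J := by
  simp only [JJ, mem_JX]

theorem prj_mem {J : Ideal B} {S : B} {Q n c d : ℕ} (hcd : c = 0 ∨ d = 0) (p : Polynomial (Polynomial B))
    (hp : p ∈ JJ J Q ⊔ Ideal.span {nS S ^ n}) : prj k c d p ∈ gI J S (Q - (c + d)) n := by
  obtain ⟨u, hu, v, hv, rfl⟩ := Submodule.mem_sup.mp hp
  obtain ⟨w, rfl⟩ := Ideal.mem_span_singleton.mp hv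
  rw [map_add, prj_nS_pow S hcd]
  refine Ideal.add_mem _ (Ideal.mem_sup_left ?_) (Ideal.mem_sup_right (Ideal.mul_mem_right _ _ (Ideal.mem_span_singleton_self _)))
  rw [mem_JX]
  intro i hi
  rw [prj_coeff]
  exact mem_JJ.mp hu _ (by omega) _ (by omega)

theorem inc_mem {J : Ideal B} {S : B} {Q n c d : ℕ} (hcd : c = 0 ∨ d = 0) (p : Polynomial B)
    (hp : p ∈ gI J S (Q - (c + d)) n) : inc k c d p ∈ JJ J Q ⊔ Ideal.span {nS S ^ n} := by
  obtain ⟨u, hu, v, hv, rfl⟩ := Submodule.mem_sup.mp hp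
  obtain ⟨w, rfl⟩ := Ideal.mem_span_singleton.mp hv
  rw [map_add]
  refine Ideal.add_mem _ (Ideal.mem_sup_left ?_) (Ideal.mem_sup_right ?_)
  · rw [mem_JJ]
    intro j hj i hi
    rw [inc_coeff]
    split_ifs with h
    · exact mem_JX.mp hu _ (by omega)
    · exact zero_mem _
  · rw [inc_apply, map_mul, map_pow (thet B), thet_V]
    exact Ideal.mul_mem_left _ _ (Ideal.mul_mem_right _ _ (Ideal.mem_span_singleton_self _))

theorem prj_inc {c d c' d' : ℕ} (hcd : c = 0 ∨ d = 0) (hcd' : c' = 0 ∨ d' = 0) (a : Polynomial B) :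
    prj k c' d' (inc k c d a) = if c' = c ∧ d' = d then a else 0 := by
  ext t
  rw [prj_coeff, inc_coeff]
  split_ifs with h1 h2 h2
  · congr 1; omega
  · omega
  · omega
  · simp

theorem pair_ph [CharP B 2] {J : Ideal B} (hJ : Fn k J) (S : B) (Q n : ℕ) (hQ : 1 ≤ Q) :
    ph k (JJ J Q) (nS S) n = gg k J S Q n + 2 * ∑ a ∈ Finset.Ico 1 Q, gg k J S a n := by
  let cc : Fin Q ⊕ Fin (Q - 1) → ℕ := Sum.elim (fun i => i) (fun _ => 0)
  let dd : Fin Q ⊕ Fin (Q - 1) → ℕ := Sum.elim (fun _ => 0) (fun i => i + 1)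
  have hcd : ∀ c, cc c = 0 ∨ dd c = 0 := by rintro (c | c) <;> simp [cc, dd]
  have := (ell_dsum (k := k) (JJ J Q ⊔ Ideal.span {nS S ^ n}) (fun c => gI J S (Q - (cc c + dd c)) n)
    (fun c => prj k (cc c) (dd c)) (fun c => inc k (cc c) (dd c))
    (fun c x hx => prj_mem (hcd c) x hx) (fun c x hx => inc_mem (hcd c) x hx) ?_ ?_ (fun c => Fn_gI hJ S _ _)).2
  · unfold ph
    rw [this, Fintype.sum_sum_type]
    simp only [cc, dd, Sum.elim_inl, Sum.elim_inr, add_zero, zero_add]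
    obtain ⟨P, rfl⟩ : ∃ P, Q = P + 1 := ⟨Q - 1, by omega⟩
    rw [Fin.sum_univ_eq_sum_range (fun i => ell k (gI J S (P + 1 - i) n)) (P + 1),
      Fin.sum_univ_eq_sum_range (fun i => ell k (gI J S (P + 1 - (i + 1)) n)) (P + 1 - 1)]
    rw [Finset.sum_range_succ', Finset.sum_Ico_eq_sum_range]
    simp only [Nat.add_sub_cancel, Nat.sub_zero, Nat.add_sub_add_right]
    rw [← Finset.sum_range_reflect]
    have : ∑ i ∈ Finset.range P, ell k (gI J S (P - (P - 1 - i)) n) = ∑ i ∈ Finset.range P, gg k J S (1 + i) n := by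
      refine Finset.sum_congr rfl fun i hi => ?_
      rw [Finset.mem_range] at hi
      rw [show P - (P - 1 - i) = 1 + i by omega]
      rfl
    rw [this]
    unfold gg
    ring
  · intro c c' a
    rw [prj_inc (hcd c) (hcd c')]
    congr 1
    rw [eq_iff_iff]
    constructor
    · rintro ⟨h1, h2⟩
      rcases c with c | c <;> rcases c' with c' | c' <;> simp [cc, dd, Fin.ext_iff] at h1 h2 ⊢ <;> omega
    · rintro rfl; exact ⟨rfl, rfl⟩
  · intro N hN hinc
    rw [eq_top_iff]
    intro p _
    induction p using Polynomial.induction_on' with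
    | add p q hp hq => exact N.add_mem (hp trivial) (hq trivial)
    | monomial j b =>
    induction b using Polynomial.induction_on' with
    | add p q hp hq => rw [map_add]; exact N.add_mem (hp trivial) (hq trivial)
    | monomial i b =>
    by_cases hb : Q ≤ i ∨ Q ≤ j
    · apply hN
      refine Ideal.mem_sup_left (mem_JJ.mpr ?_)
      intro j' hj' i' hi'
      rw [Polynomial.coeff_monomial]
      split_ifs with h
      · rw [Polynomial.coeff_monomial, if_neg (by omega)]; exact zero_mem _
      · simp
    · push Not at hb
      have key : ∀ c : Fin Q ⊕ Fin (Q - 1), ∀ t, t + cc c = i → t + dd c = j →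
          Polynomial.monomial j (Polynomial.monomial i b) ∈ N := by
        intro c t h1 h2
        convert hinc c (Polynomial.monomial t b) using 1
        ext j' i'
        rw [inc_coeff]
        simp only [Polynomial.coeff_monomial]
        split_ifs <;> first | rfl | omega | simp [Polynomial.coeff_monomial]
        all_goals omega
      by_cases hij : j ≤ i
      · exact key (Sum.inl ⟨i - j, by omega⟩) j (by simp [cc]; omega) (by simp [dd])
      · exact key (Sum.inr ⟨j - i - 1, by omega⟩) i (by simp [cc]) (by simp [dd]; omega)

theorem Fn_JJ {J : Ideal B} (hJ : Fn k J) (Q : ℕ) : Fn k (JJ J Q) :=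
  (ell_JX _ (ell_JX J hJ Q).1 Q).1

theorem nS_mem [CharP B 2] {J : Ideal B} {S : B} {r : ℕ} (hS : S ^ 2 ^ r ∈ J) : nS S ^ 2 ^ r ∈ JJ J (2 ^ r) := by
  unfold nS
  rw [add_pow_char_pow, mul_pow, ← map_pow, ← map_pow]
  refine Ideal.add_mem _ (Ideal.mem_sup_left (Ideal.mem_map_of_mem _ (Ideal.mem_sup_left (Ideal.mem_map_of_mem _ hS)))) ?_
  exact Ideal.mem_sup_right (Ideal.mul_mem_left _ _ (Ideal.mem_span_singleton_self _))

end HKaux4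

section HKaux5

variable {k : Type*} [Field k] {n : ℕ}

/-- exponent vector -/
noncomputable def epv (ε : Fin n → Fin 2) : Fin n →₀ ℕ := Finsupp.equivFunOnFinite.symm (fun i => (ε i : ℕ))

theorem epv_apply (ε : Fin n → Fin 2) (i : Fin n) : epv ε i = ε i := rfl

/-- half -/
noncomputable def hlf (u : Fin n →₀ ℕ) : Fin n →₀ ℕ := u.mapRange (fun t => t / 2) rfl

theorem hlf_apply (u : Fin n →₀ ℕ) (i : Fin n) : hlf u i = u i / 2 := rfl

/-- parity -/
def par (u : Fin n →₀ ℕ) : Fin n → Fin 2 := fun i => ⟨u i % 2, Nat.mod_lt _ two_pos⟩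

theorem par_eq (u s : Fin n →₀ ℕ) : par (u + 2 • s) = par u := by
  funext i
  simp [par]

theorem par_epv (ε : Fin n → Fin 2) : par (epv ε) = ε := by
  funext i
  have := (ε i).2
  simp only [par, Fin.ext_iff, epv_apply]
  omega

theorem hlf_eq (u s : Fin n →₀ ℕ) : hlf (u + 2 • s) = hlf u + s := by
  ext i
  simp [hlf_apply]
  omega

theorem hlf_epv (ε : Fin n → Fin 2) : hlf (epv ε) = 0 := by
  ext i
  have := (ε i).2
  simp only [hlf_apply, epv_apply, Finsupp.coe_zero, Pi.zero_apply]
  omega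

theorem hlf_par (u : Fin n →₀ ℕ) : epv (par u) + 2 • hlf u = u := by
  ext i
  simp [hlf_apply, epv_apply, par]
  omega

variable (k) in
/-- the inclusion -/
noncomputable def finc (ε : Fin n → Fin 2) : MvPolynomial (Fin n) k →ₗ[k] MvPolynomial (Fin n) k :=
  (LinearMap.mulLeft k (monomial (epv ε) 1)).comp (expand 2).toLinearMap

theorem finc_apply (ε : Fin n → Fin 2) (a : MvPolynomial (Fin n) k) :
    finc k ε a = monomial (epv ε) 1 * expand 2 a := rfl

theorem expand_mon (s : Fin n →₀ ℕ) (b : k) : expand 2 (monomial s b) = monomial (2 • s) b := by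
  simp [expand_monomial]

variable (k) in
/-- the projection -/
noncomputable def fprj (ε : Fin n → Fin 2) : MvPolynomial (Fin n) k →ₗ[k] MvPolynomial (Fin n) k :=
  (basisMonomials (Fin n) k).constr k (fun u => if ε = par u then monomial (hlf u) 1 else 0)

theorem fprj_mon (ε : Fin n → Fin 2) (u : Fin n →₀ ℕ) (b : k) :
    fprj k ε (monomial u b) = if ε = par u then monomial (hlf u) b else 0 := by
  have h : (monomial u b : MvPolynomial (Fin n) k) = b • basisMonomials (Fin n) k u := by
    simp [smul_monomial]
  rw [h, map_smul, fprj, Module.Basis.constr_basis]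
  split_ifs
  · simp [smul_monomial]
  · simp

theorem fprj_mul (ε : Fin n → Fin 2) (p a : MvPolynomial (Fin n) k) :
    fprj k ε (p * expand 2 a) = fprj k ε p * a := by
  induction p using MvPolynomial.induction_on' with
  | add p q hp hq => rw [add_mul, map_add, hp, hq, map_add, add_mul]
  | monomial u b =>
  induction a using MvPolynomial.induction_on' with
  | add p q hp hq => rw [map_add, mul_add, map_add, hp, hq, mul_add]
  | monomial s c =>
    rw [expand_mon, monomial_mul, fprj_mon, fprj_mon, par_eq, hlf_eq]
    split_ifs
    · rw [monomial_mul]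
    · rw [zero_mul]

theorem ell_expand (I : Ideal (MvPolynomial (Fin n) k)) (hI : Fn k I) :
    ell k (I.map (expand 2 : MvPolynomial (Fin n) k →ₐ[k] MvPolynomial (Fin n) k)) = 2 ^ n * ell k I := by
  have := (ell_dsum (k := k) (I.map (expand 2 : MvPolynomial (Fin n) k →ₐ[k] MvPolynomial (Fin n) k))
    (fun _ : Fin n → Fin 2 => I) (fprj k) (finc k) ?_ ?_ ?_ ?_ (fun _ => hI)).2
  · rw [this]; simp
  · intro ε x hx
    refine Submodule.span_induction (p := fun x _ => ∀ y, fprj k ε (y * x) ∈ I) ?_ ?_ ?_ ?_ hx 1 |> fun h => by simpa using h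
    · rintro _ ⟨a, ha, rfl⟩ y
      change fprj k ε (y * expand 2 a) ∈ I
      rw [fprj_mul]
      exact Ideal.mul_mem_left _ _ ha
    · intro y; simp
    · intro p q _ _ hp hq y
      rw [mul_add, map_add]; exact Ideal.add_mem _ (hp y) (hq y)
    · intro r p _ hp y
      rw [smul_eq_mul, ← mul_assoc]; exact hp _
  · intro ε x hx
    exact Ideal.mul_mem_left _ _ (Ideal.mem_map_of_mem _ hx)
  · intro ε ε' a
    rw [finc_apply, fprj_mul, fprj_mon, par_epv, hlf_epv]
    split_ifs <;> simp
  · intro N _ hinc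
    rw [eq_top_iff]
    intro p _
    induction p using MvPolynomial.induction_on' with
    | add p q hp hq => exact N.add_mem (hp trivial) (hq trivial)
    | monomial u b =>
      have := hinc (par u) (monomial (hlf u) b)
      rwa [finc_apply, expand_mon, monomial_mul, hlf_par, one_mul] at this

end HKaux5

section HKaux6

variable (k : Type*) [Field k]

theorem bd1 (m : ℕ) (i : Fin m) : 2 * (i : ℕ) < 2 * m + 1 := by have := i.2; omega

theorem bd2 (m : ℕ) (i : Fin m) : 2 * (i : ℕ) + 1 < 2 * m + 1 := by have := i.2; omega

theorem bd3 (m : ℕ) : 2 * m < 2 * m + 1 := Nat.lt_succ_self _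

/-- the polynomial -/
noncomputable def fm (m : ℕ) : MvPolynomial (Fin (2 * m + 1)) k :=
  (∑ i : Fin m,
              (X (⟨2 * i, bd1 m i⟩ : Fin (2 * m + 1)) : MvPolynomial (Fin (2 * m + 1)) k) *
                X (⟨2 * i + 1, bd2 m i⟩ : Fin (2 * m + 1))) +
            X (⟨2 * m, bd3 m⟩ : Fin (2 * m + 1)) ^ 3

/-- the ideal of powers of variables -/
noncomputable def Jn (n Q : ℕ) : Ideal (MvPolynomial (Fin n) k) :=
  Ideal.span (Set.range (fun i : Fin n => (X i : MvPolynomial (Fin n) k) ^ Q))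

/-- peel off the first variable -/
theorem Jn_succ (n Q : ℕ) :
    (Jn k (n + 1) Q).map ((finSuccEquiv k n : _ ≃ₐ[k] _) : MvPolynomial (Fin (n + 1)) k →+* Polynomial (MvPolynomial (Fin n) k))
      = JX (Jn k n Q) Q := by
  unfold Jn JX
  rw [Ideal.map_span, Ideal.map_span, ← Set.range_comp, ← Set.range_comp, ← Ideal.span_union]
  congr 1
  ext p
  simp only [Set.mem_range, Set.mem_union, Set.mem_singleton_iff, Fin.exists_fin_succ, Function.comp]
  simp only [RingHom.coe_coe, map_pow, finSuccEquiv_X_zero, finSuccEquiv_X_succ]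
  rw [or_comm, eq_comm]

theorem Fn_equiv_iff {k : Type*} [Field k] {A : Type*} [CommRing A] [Algebra k A]
    {B : Type*} [CommRing B] [Algebra k B] (f : A ≃ₐ[k] B) (I : Ideal A) (J : Ideal B)
    (h : J = I.map (f : A →+* B)) : Fn k J → Fn k I := by
  refine (ell_equiv f.symm J I ?_).2
  rw [h, Ideal.map_map]
  have : ((f.symm : B →+* A).comp (f : A →+* B)) = RingHom.id A := by ext; simp
  rw [this, Ideal.map_id]

theorem ell_bot0 : Fn k (⊥ : Ideal (MvPolynomial (Fin 0) k)) ∧ ell k (⊥ : Ideal (MvPolynomial (Fin 0) k)) = 1 := by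
  have e : (MvPolynomial (Fin 0) k ⧸ (⊥ : Ideal (MvPolynomial (Fin 0) k))) ≃ₐ[k] k :=
    (AlgEquiv.quotientBot k _).trans (isEmptyAlgEquiv k (Fin 0))
  constructor
  · exact Module.Finite.equiv e.symm.toLinearEquiv
  · unfold ell
    rw [e.toLinearEquiv.finrank_eq]
    simp

theorem Jn_zero (Q : ℕ) : Jn k 0 Q = ⊥ := by
  unfold Jn
  simp

theorem ell_Jn (n Q : ℕ) : Fn k (Jn k n Q) ∧ ell k (Jn k n Q) = Q ^ n := by
  induction n with
  | zero => rw [Jn_zero]; simpa using ell_bot0 k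
  | succ n ih =>
    have h := (Jn_succ k n Q).symm
    refine ⟨Fn_equiv_iff _ _ _ h (ell_JX _ ih.1 Q).1, ?_⟩
    rw [(ell_equiv _ _ _ h).1, (ell_JX _ ih.1 Q).2, ih.2]
    ring

theorem X_mem_Jn {n : ℕ} (i : Fin n) (Q : ℕ) : (X i : MvPolynomial (Fin n) k) ^ Q ∈ Jn k n Q :=
  Ideal.subset_span ⟨i, rfl⟩

theorem fm_pow [CharP k 2] (m r : ℕ) : fm k m ^ 2 ^ r ∈ Jn k (2 * m + 1) (2 ^ r) := by
  unfold fm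
  rw [add_pow_char_pow, sum_pow_char_pow]
  refine Ideal.add_mem _ (Ideal.sum_mem _ fun i _ => ?_) ?_
  · rw [mul_pow]
    exact Ideal.mul_mem_left _ _ (X_mem_Jn k _ _)
  · rw [← pow_mul, Nat.mul_comm 3, pow_mul]
    exact Ideal.pow_mem_of_mem _ (X_mem_Jn k _ _) _ (by norm_num)

/-- the equivalence peeling off two variables -/
noncomputable def pe (m : ℕ) : MvPolynomial (Fin (2 * (m + 1) + 1)) k ≃ₐ[k]
    Polynomial (Polynomial (MvPolynomial (Fin (2 * m + 1)) k)) :=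
  (finSuccEquiv k (2 * m + 1 + 1)).trans (Polynomial.mapAlgEquiv (finSuccEquiv k (2 * m + 1)))

theorem pe_J (m Q : ℕ) : JJ (Jn k (2 * m + 1) Q) Q = (Jn k (2 * (m + 1) + 1) Q).map
    ((pe k m : _ ≃ₐ[k] _) : MvPolynomial (Fin (2 * (m + 1) + 1)) k →+* _) := by
  have h1 := Jn_succ k (2 * m + 1 + 1) Q
  have h2 := Jn_succ k (2 * m + 1) Q
  have e : ((pe k m : _ ≃ₐ[k] _) : MvPolynomial (Fin (2 * (m + 1) + 1)) k →+* _) =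
    (Polynomial.mapRingHom ((finSuccEquiv k (2 * m + 1) : _ ≃ₐ[k] _) : MvPolynomial (Fin (2 * m + 1 + 1)) k →+* Polynomial (MvPolynomial (Fin (2 * m + 1)) k))).comp
    ((finSuccEquiv k (2 * m + 1 + 1) : _ ≃ₐ[k] _) : MvPolynomial (Fin (2 * m + 1 + 1 + 1)) k →+* Polynomial (MvPolynomial (Fin (2 * m + 1 + 1)) k)) := by
    ext <;> rfl
  rw [e, ← Ideal.map_map]
  erw [h1]
  unfold JJ
  rw [← h2]
  unfold JX
  rw [Ideal.map_sup, Ideal.map_map, Ideal.map_map, Ideal.map_span, Set.image_singleton]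
  congr 2
  · ext <;> simp
  · simp

theorem pe_X0 (m : ℕ) : pe k m (X ⟨0, by omega⟩) = Polynomial.X := by
  have : finSuccEquiv k (2 * m + 1 + 1) (X ⟨0, by omega⟩) = Polynomial.X := finSuccEquiv_X_zero
  change Polynomial.mapAlgEquiv (finSuccEquiv k (2 * m + 1)) (finSuccEquiv k (2 * m + 1 + 1) (X ⟨0, by omega⟩)) = _
  rw [this]; simp

theorem pe_X1 (m : ℕ) : pe k m (X ⟨1, by omega⟩) = Polynomial.C Polynomial.X := by
  have : finSuccEquiv k (2 * m + 1 + 1) (X ⟨1, by omega⟩) = Polynomial.C (X 0) := finSuccEquiv_X_succ (j := 0)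
  change Polynomial.mapAlgEquiv (finSuccEquiv k (2 * m + 1)) (finSuccEquiv k (2 * m + 1 + 1) (X ⟨1, by omega⟩)) = _
  rw [this, Polynomial.coe_mapAlgEquiv, Polynomial.map_C]
  exact congrArg _ finSuccEquiv_X_zero

theorem pe_X2 (m i : ℕ) (hi : i < 2 * m + 1) : pe k m (X ⟨i + 2, by omega⟩) = Polynomial.C (Polynomial.C (X ⟨i, hi⟩)) := by
  have : finSuccEquiv k (2 * m + 1 + 1) (X ⟨i + 2, by omega⟩) = Polynomial.C (X (Fin.succ ⟨i, hi⟩)) :=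
    finSuccEquiv_X_succ (j := ⟨i + 1, by omega⟩)
  change Polynomial.mapAlgEquiv (finSuccEquiv k (2 * m + 1)) (finSuccEquiv k (2 * m + 1 + 1) (X ⟨i + 2, by omega⟩)) = _
  rw [this, Polynomial.coe_mapAlgEquiv, Polynomial.map_C]
  exact congrArg _ finSuccEquiv_X_succ

theorem pe_f (m : ℕ) : pe k m (fm k (m + 1)) = nS (fm k m) := by
  unfold fm nS
  rw [map_add, map_sum, Fin.sum_univ_succ, map_pow]
  have h0 : pe k m (X (⟨2 * (0 : Fin (m + 1)), by simp⟩) * X ⟨2 * (0 : Fin (m + 1)) + 1, by simp⟩)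
     = Polynomial.C Polynomial.X * Polynomial.X := by
    rw [map_mul]
    exact (congrArg₂ _ (pe_X0 k m) (pe_X1 k m)).trans Polynomial.X_mul
  have h1 : ∀ i : Fin m, pe k m (X (⟨2 * (i.succ : Fin (m + 1)), by omega⟩) * X ⟨2 * (i.succ : Fin (m + 1)) + 1, by omega⟩)
     = Polynomial.C (Polynomial.C (X ⟨2 * i, bd1 m i⟩)) * Polynomial.C (Polynomial.C (X ⟨2 * i + 1, bd2 m i⟩)) := by
    intro i
    rw [map_mul]
    exact congrArg₂ _ (pe_X2 k m (2 * i) _) (pe_X2 k m (2 * i + 1) _)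
  have h2 : pe k m (X ⟨2 * (m + 1), by omega⟩) = Polynomial.C (Polynomial.C (X ⟨2 * m, bd3 m⟩)) :=
    pe_X2 k m (2 * m) _
  rw [h0, h2, Finset.sum_congr rfl (fun i _ => h1 i)]
  simp only [map_add, map_sum, map_mul, map_pow]
  ring

theorem ph_succ (m Q n : ℕ) : ph k (Jn k (2 * (m + 1) + 1) Q) (fm k (m + 1)) n =
    ph k (JJ (Jn k (2 * m + 1) Q) Q) (nS (fm k m)) n := by
  refine (ell_equiv (pe k m) _ _ ?_).1
  rw [Ideal.map_sup, ← pe_J, Ideal.map_span, Set.image_singleton]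
  congr 3
  rw [map_pow, RingHom.coe_coe, pe_f]

theorem ph_base (Q n : ℕ) : ph k (Jn k (2 * 0 + 1) Q) (fm k 0) n = min Q (3 * n) := by
  have : JX (Jn k 0 Q) (min Q (3 * n)) = (Jn k (0 + 1) Q ⊔ Ideal.span {(fm k 0 : MvPolynomial (Fin 1) k) ^ n}).map
      ((finSuccEquiv k 0 : _ ≃ₐ[k] _) : MvPolynomial (Fin (0 + 1)) k →+* _) := by
    rw [Ideal.map_sup, Jn_succ, Ideal.map_span, Set.image_singleton]
    have hf : finSuccEquiv k 0 (fm k 0) = Polynomial.X ^ 3 := by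
      have : fm k 0 = (X 0 : MvPolynomial (Fin 1) k) ^ 3 := by unfold fm; simp
      rw [this, map_pow, finSuccEquiv_X_zero]
    rw [map_pow, RingHom.coe_coe, hf, ← pow_mul]
    unfold JX
    rw [sup_assoc]
    congr 1
    rcases le_total Q (3 * n) with h | h
    · rw [min_eq_left h, eq_comm, sup_eq_left, Ideal.span_singleton_le_span_singleton]
      exact pow_dvd_pow _ h
    · rw [min_eq_right h, eq_comm, sup_eq_right, Ideal.span_singleton_le_span_singleton]
      exact pow_dvd_pow _ h
  have h2 := (ell_equiv (finSuccEquiv k 0) _ _ this).1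
  unfold ph
  refine h2.trans ?_
  rw [(ell_JX _ (ell_Jn k 0 Q).1 _).2, (ell_Jn k 0 Q).2]
  simp

theorem alt_base (r : ℕ) (hr : 1 ≤ r) : alt (fun n => ((min (2 ^ r) (3 * n) : ℕ) : ℤ)) (2 ^ r) = 2 := by
  have h3 : ∃ u, 2 ^ r = 6 * u + 2 ∨ 2 ^ r = 6 * u + 4 := by
    induction r, hr using Nat.le_induction with
    | base => exact ⟨0, by norm_num⟩
    | succ r hr ih =>
      obtain ⟨u, h | h⟩ := ih
      · exact ⟨2 * u, by rw [pow_succ]; omega⟩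
      · exact ⟨2 * u + 1, by rw [pow_succ]; omega⟩
  obtain ⟨u, hu⟩ := h3
  set Q := 2 ^ r
  obtain ⟨s, hs⟩ : ∃ s, Q = 2 * u + (2 + s) := ⟨Q - 2 * u - 2, by omega⟩
  have e1 : alt (fun n => ((min Q (3 * n) : ℕ) : ℤ)) (2 * u) = 0 := by
    rw [← alt_lin 3 (Q := 2 * u) (by simp)]
    refine alt_congr fun i hi => ?_
    rw [min_eq_right (by omega)]; push_cast; ring
  have e2 : alt (fun i => ((min Q (3 * (2 * u + (2 + i))) : ℕ) : ℤ)) s = 0 := by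
    unfold alt
    refine Finset.sum_eq_zero fun i _ => ?_
    beta_reduce
    rw [min_eq_left (by omega), min_eq_left (by omega)]; simp
  have e3 : alt (fun i => ((min Q (3 * (2 * u + i)) : ℕ) : ℤ)) 2 = 2 := by
    unfold alt
    rw [show (2 : ℕ) = 1 + 1 from rfl, Finset.sum_range_succ, Finset.sum_range_one]
    simp only [pow_zero, one_mul, pow_one]
    omega
  have h4 : alt (fun n => ((min Q (3 * n) : ℕ) : ℤ)) Q = alt (fun n => ((min Q (3 * n) : ℕ) : ℤ)) (2 * u + (2 + s)) := by
    rw [← hs]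
  rw [h4, alt_split, alt_split, e1, e2, e3, pow_mul]
  norm_num

theorem pairF [CharP k 2] (m r : ℕ) (hr : 1 ≤ r) :
    alt (ph k (Jn k (2 * (m + 1) + 1) (2 ^ r)) (fm k (m + 1))) (2 ^ r) =
      2 ^ r * alt (ph k (Jn k (2 * m + 1) (2 ^ r)) (fm k m)) (2 ^ r) ∧
    2 * ph k (Jn k (2 * (m + 1) + 1) (2 ^ r)) (fm k (m + 1)) 1 - ph k (Jn k (2 * (m + 1) + 1) (2 ^ r)) (fm k (m + 1)) 2 =
      2 * alt (ph k (Jn k (2 * m + 1) (2 ^ r)) (fm k m)) (2 ^ r) := by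
  have hF : ∀ n, ph k (Jn k (2 * (m + 1) + 1) (2 ^ r)) (fm k (m + 1)) n =
      gg k (Jn k (2 * m + 1) (2 ^ r)) (fm k m) (2 ^ r) n +
        2 * ∑ a ∈ Finset.Ico 1 (2 ^ r), gg k (Jn k (2 * m + 1) (2 ^ r)) (fm k m) a n := by
    intro n
    rw [ph_succ]
    exact pair_ph (ell_Jn k (2 * m + 1) (2 ^ r)).1 _ _ _ Nat.one_le_two_pow
  generalize ph k (Jn k (2 * (m + 1) + 1) (2 ^ r)) (fm k (m + 1)) = F at hF
  have h1 := (ell_Jn k (2 * m + 1) (2 ^ r)).1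
  have h2 := fm_pow k m r
  have := pair_alt (k := k) (J := Jn k (2 * m + 1) (2 ^ r)) (S := fm k m) (r := r) h1 hr h2 F hF
  exact this

theorem alt_fm [CharP k 2] (m r : ℕ) (hr : 1 ≤ r) :
    alt (ph k (Jn k (2 * m + 1) (2 ^ r)) (fm k m)) (2 ^ r) = 2 * (2 ^ r) ^ m := by
  induction m with
  | zero =>
    rw [alt_congr (fun n _ => ph_base k (2 ^ r) n)]
    have := alt_base r hr
    simpa using this
  | succ m ih =>
    rw [(pairF k m r hr).1, ih]
    ring

theorem expand_fm [CharP k 2] (m : ℕ) : expand 2 (fm k m) = fm k m ^ 2 := by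
  unfold fm
  rw [add_pow_char, sum_pow_char]
  rw [map_add, map_sum, map_pow, expand_X, ← pow_mul, ← pow_mul, Nat.mul_comm 3]
  refine congrArg (fun t => t + _) (Finset.sum_congr rfl fun i _ => ?_)
  rw [map_mul, expand_X, expand_X, mul_pow]

theorem ph_two [CharP k 2] (m q : ℕ) :
    ph k (Jn k (2 * m + 1) (2 * q)) (fm k m) 2 = 2 ^ (2 * m + 1) * ph k (Jn k (2 * m + 1) q) (fm k m) 1 := by
  unfold ph
  rw [← ell_expand _ ((ell_Jn k (2 * m + 1) q).1.mono le_sup_left), Ideal.map_sup]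
  congr 2
  · unfold Jn
    rw [Ideal.map_span, ← Set.range_comp]
    congr 2
    funext i
    simp [pow_mul]
  · rw [Ideal.map_span, Set.image_singleton, pow_one]
    congr 2
    exact (expand_fm k m).symm

theorem ph_recur [CharP k 2] (m e : ℕ) :
    2 * ph k (Jn k (2 * (m + 1) + 1) (2 ^ (e + 1))) (fm k (m + 1)) 1 =
      2 ^ (2 * (m + 1) + 1) * ph k (Jn k (2 * (m + 1) + 1) (2 ^ e)) (fm k (m + 1)) 1 + 4 * 2 ^ ((e + 1) * m) := by
  have h := (pairF k m (e + 1) (by omega)).2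
  rw [alt_fm k m (e + 1) (by omega)] at h
  have h2 := ph_two k (m + 1) (2 ^ e)
  rw [← pow_succ'] at h2
  rw [h2, ← pow_mul] at h
  linear_combination h

theorem ph_zero [CharP k 2] (m : ℕ) : ph k (Jn k (2 * m + 1) (2 ^ 0)) (fm k m) 1 = 1 := by
  unfold ph
  have h := fm_pow k m 0
  rw [pow_zero] at h ⊢
  rw [sup_eq_left.mpr ((Ideal.span_singleton_le_iff_mem _).mpr h), (ell_Jn k _ 1).2]
  simp

theorem ph_closed [CharP k 2] (m e : ℕ) :
    ((2 : ℤ) ^ (m + 1 + 1) - 1) * ph k (Jn k (2 * (m + 1) + 1) (2 ^ e)) (fm k (m + 1)) 1 =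
      (2 ^ (m + 1 + 1) + 1) * 2 ^ (2 * (m + 1) * e) - 2 * 2 ^ (e * m) := by
  induction e with
  | zero => rw [ph_zero]; ring
  | succ e ih =>
    have h := ph_recur k m e
    have : (2 : ℤ) ≠ 0 := two_ne_zero
    apply mul_left_cancel₀ this
    have e1 : (2 : ℤ) ^ (m + 1 + 1) = 4 * 2 ^ m := by ring
    have e2 : (2 : ℤ) ^ (2 * (m + 1) + 1) = 8 * (2 ^ m) ^ 2 := by ring
    have e3 : (2 : ℤ) ^ ((e + 1) * m) = 2 ^ (e * m) * 2 ^ m := by ring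
    have e4 : (2 : ℤ) ^ (2 * (m + 1) * (e + 1)) = 2 ^ (2 * (m + 1) * e) * (4 * (2 ^ m) ^ 2) := by ring
    rw [e1] at ih
    rw [e2, e3] at h
    rw [e1, e3, e4]
    linear_combination (4 * (2 : ℤ) ^ m - 1) * h + 8 * (2 ^ m) ^ 2 * ih

end HKaux6
/-- Hilbert–Kunz function of the even-dimensional `A₂` singularity in characteristic 2:
for `d = 2m`,
`(2^{m+1} − 1) · HK_e(S_{2,d}) = (2^{m+1} + 1) · 2^{d·e} − 2 · 2^{e(m−1)}`. -/
theorem HK_function_A2_char_two_even (k : Type*) [Field k] [CharP k 2]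
    (m : ℕ) (hm : 1 ≤ m) (e : ℕ) :
    ((2 : ℤ) ^ (m + 1) - 1) *
        (HKfun k (2 * m + 1) 2 e
          ((∑ i : Fin m,
              (X (⟨2 * i, by omega⟩ : Fin (2 * m + 1)) : MvPolynomial (Fin (2 * m + 1)) k) *
                X (⟨2 * i + 1, by omega⟩ : Fin (2 * m + 1))) +
            X (⟨2 * m, by omega⟩ : Fin (2 * m + 1)) ^ 3)) =
      (2 ^ (m + 1) + 1) * 2 ^ (2 * m * e) - 2 * 2 ^ (e * (m - 1)) := by
  obtain ⟨m, rfl⟩ : ∃ m', m = m' + 1 := ⟨m - 1, by omega⟩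
  have h := ph_closed k m e
  have h2 : ph k (Jn k (2 * (m + 1) + 1) (2 ^ e)) (fm k (m + 1)) 1 =
      (HKfun k (2 * (m + 1) + 1) 2 e (fm k (m + 1)) : ℤ) := by
    unfold ph ell HKfun Jn
    rw [Ideal.span_union, pow_one]
  rw [h2] at h
  exact h
end

section
/- Let k be a field of characteristic 2, let m ≥ 0, set d = 2m + 1, and let e ≥ 1. Then 2^m · dim_k ( k[x_0,…,x_d] / (x_0^{2^e},…,x_d^{2^e}, x_0x_1 + x_2x_3 + ⋯ + x_{2m−2}x_{2m−1} + x_{2m}² + x_{2m+1}³) ) = (2^m + 1) · 2^{d·e}. In particular the Hilbert–Kunz function of the odd-dimensional A_2 singularity in characteristic 2 is HK_e(S_{2,d}) = ((2^m+1)/2^m)·2^{de} for d = 2m+1. -/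
open MvPolynomial

theorem hk_step (k R R' ι : Type*) [Field k] [CommRing R] [CommRing R'] [Algebra k R] [Algebra k R']
    [Algebra R R'] [IsScalarTower k R R'] [Module.Finite k R] [Fintype ι] [DecidableEq ι]
    (h : R) (hh : h * h = 0) (u : R') (b : Module.Basis (ι × Fin 2 × Fin 2) R R')
    (h00 : ∀ i, u * b (i, 0, 0) = b (i, 1, 1))
    (h01 : ∀ i, u * b (i, 0, 1) = 0) (h10 : ∀ i, u * b (i, 1, 0) = 0)
    (h11 : ∀ i, u * b (i, 1, 1) = 0) :
    Module.finrank k (R' ⧸ Ideal.span {algebraMap R R' h + u}) =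
      Fintype.card ι * (Module.finrank k R + 2 * Module.finrank k (R ⧸ Ideal.span {h})) := by
  classical
  let I := Ideal.span {h}
  let Φ : R' →ₗ[R] (ι → R × (R ⧸ I) × (R ⧸ I)) := LinearMap.pi fun p =>
    ((b.coord (p, 0, 0) - h • b.coord (p, 1, 1)).prod
      (((Algebra.linearMap R (R ⧸ I)).comp (b.coord (p, 0, 1))).prod
        ((Algebra.linearMap R (R ⧸ I)).comp (b.coord (p, 1, 0)))))
  have hΦ : ∀ t p, Φ t p = (b.repr t (p, 0, 0) - h * b.repr t (p, 1, 1),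
      Ideal.Quotient.mk I (b.repr t (p, 0, 1)), Ideal.Quotient.mk I (b.repr t (p, 1, 0))) := by
    intro t p; rfl
  have hsurj : Function.Surjective Φ := by
    intro y
    choose c1 hc1 using fun p => Ideal.Quotient.mk_surjective (y p).2.1
    choose c2 hc2 using fun p => Ideal.Quotient.mk_surjective (y p).2.2
    refine ⟨∑ p, ((y p).1 • b (p, 0, 0) + c1 p • b (p, 0, 1) + c2 p • b (p, 1, 0)), ?_⟩
    funext p
    rw [hΦ]
    simp [Finsupp.single_apply, hc1, hc2, map_sum, Finset.sum_add_distrib]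
  have hker : ∀ t, Φ t = 0 ↔ t ∈ Ideal.span {algebraMap R R' h + u} := by
    intro t
    rw [Ideal.mem_span_singleton']
    constructor
    · intro ht
      have h1 : ∀ p, b.repr t (p, 0, 0) = h * b.repr t (p, 1, 1) := fun p => by
        have := congrFun ht p; rw [hΦ] at this
        exact sub_eq_zero.1 (congrArg Prod.fst this)
      have h2 : ∀ p, ∃ a, a * h = b.repr t (p, 0, 1) := fun p => by
        have := congrFun ht p; rw [hΦ] at this
        have := congrArg (fun z => z.2.1) this
        exact Ideal.mem_span_singleton'.1 (Ideal.Quotient.eq_zero_iff_mem.1 this)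
      have h3 : ∀ p, ∃ a, a * h = b.repr t (p, 1, 0) := fun p => by
        have := congrFun ht p; rw [hΦ] at this
        have := congrArg (fun z => z.2.2) this
        exact Ideal.mem_span_singleton'.1 (Ideal.Quotient.eq_zero_iff_mem.1 this)
      choose c1 hc1 using h2
      choose c2 hc2 using h3
      refine ⟨∑ p, (b.repr t (p, 1, 1) • b (p, 0, 0) + c1 p • b (p, 0, 1) + c2 p • b (p, 1, 0)), ?_⟩
      conv_rhs => rw [← b.sum_repr t]
      rw [Fintype.sum_prod_type, Finset.sum_mul]
      refine Finset.sum_congr rfl fun p _ => ?_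
      rw [Fintype.sum_prod_type]
      simp only [Fin.sum_univ_two, h1, ← hc1, ← hc2]
      simp only [Algebra.smul_def, map_mul]
      linear_combination (algebraMap R R' (b.repr t (p, 1, 1))) * h00 p +
        algebraMap R R' (c1 p) * h01 p + algebraMap R R' (c2 p) * h10 p
    · rintro ⟨a, rfl⟩
      have : Φ.comp (LinearMap.mulRight R (algebraMap R R' h + u)) = 0 := by
        refine b.ext ?_
        rintro ⟨i, s, t⟩
        have e : ∀ x, x * (algebraMap R R' h + u) = h • x + u * x := fun x => by
          rw [Algebra.smul_def]; ring
        have hI : Ideal.Quotient.mk I h = 0 :=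
          Ideal.Quotient.eq_zero_iff_mem.2 (Ideal.mem_span_singleton_self h)
        funext p
        rw [LinearMap.comp_apply, LinearMap.mulRight_apply, e, hΦ]
        fin_cases s <;> fin_cases t <;>
          simp [h00, h01, h10, h11, Finsupp.single_apply, hh, hI] <;>
          split_ifs <;> simp [hh, hI]
      exact LinearMap.congr_fun this a
  have e1 : (R' ⧸ Ideal.span {algebraMap R R' h + u}) ≃ₗ[k] (ι → R × (R ⧸ I) × (R ⧸ I)) := by
    have hk : LinearMap.ker (Φ.restrictScalars k) =
        (Ideal.span {algebraMap R R' h + u}).restrictScalars k := by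
      ext t; simpa using hker t
    exact (Submodule.Quotient.restrictScalarsEquiv k (Ideal.span {algebraMap R R' h + u})).symm.trans
     ((Submodule.quotEquivOfEq _ _ hk.symm).trans
      ((Φ.restrictScalars k).quotKerEquivOfSurjective hsurj))
  have : Module.Finite k (R ⧸ I) := Module.Finite.trans R _
  rw [e1.finrank_eq, Module.finrank_pi_fintype]
  simp only [Module.finrank_prod, Finset.sum_const, Finset.card_univ, smul_eq_mul]
  ring

theorem hk_finite_of_basis (k R A ι : Type*) [Field k] [CommRing R] [CommRing A] [Algebra k R]
    [Algebra k A] [Algebra R A] [IsScalarTower k R A] [Module.Finite k R] [Fintype ι]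
    (b : Module.Basis ι R A) : Module.Finite k A :=
  Module.Finite.equiv (b.equivFun.restrictScalars k).symm

theorem hk_finrank_of_basis (k R A ι : Type*) [Field k] [CommRing R] [CommRing A] [Algebra k R]
    [Algebra k A] [Algebra R A] [IsScalarTower k R A] [Module.Finite k R] [Fintype ι]
    (b : Module.Basis ι R A) : Module.finrank k A = Fintype.card ι * Module.finrank k R := by
  rw [(b.equivFun.restrictScalars k).finrank_eq, Module.finrank_pi_fintype]
  simp

/-- truncated polynomial ring -/
abbrev HKS (k : Type*) [Field k] (q n : ℕ) : Type _ :=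
  MvPolynomial (Fin n) k ⧸ Ideal.span (Set.range fun i : Fin n => (X i : MvPolynomial (Fin n) k) ^ q)

/-- the variables -/
noncomputable def hkv (k : Type*) [Field k] (q n : ℕ) (i : Fin n) : HKS k q n :=
  Ideal.Quotient.mkₐ k _ (X i)

theorem hkv_pow (k : Type*) [Field k] (q n : ℕ) (i : Fin n) : hkv k q n i ^ q = 0 := by
  rw [hkv, ← map_pow]
  exact Ideal.Quotient.eq_zero_iff_mem.2 (Ideal.subset_span ⟨i, rfl⟩)

/-- lift -/
noncomputable def hkLift {k : Type*} [Field k] {q n : ℕ} {A : Type*} [CommRing A] [Algebra k A]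
    (v : Fin n → A) (hv : ∀ i, v i ^ q = 0) : HKS k q n →ₐ[k] A :=
  Ideal.Quotient.liftₐ _ (aeval v) (by
    intro a ha
    have : Ideal.span (Set.range fun i : Fin n => (X i : MvPolynomial (Fin n) k) ^ q) ≤
        RingHom.ker (aeval v : MvPolynomial (Fin n) k →ₐ[k] A) := by
      rw [Ideal.span_le]
      rintro _ ⟨i, rfl⟩
      simp [hv]
    exact this ha)

@[simp] theorem hkLift_v {k : Type*} [Field k] {q n : ℕ} {A : Type*} [CommRing A] [Algebra k A]
    (v : Fin n → A) (hv : ∀ i, v i ^ q = 0) (i : Fin n) :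
    hkLift (k := k) v hv (hkv k q n i) = v i := by
  have : hkLift (k := k) v hv (hkv k q n i) = aeval v (X i : MvPolynomial (Fin n) k) := rfl
  rw [this, aeval_X]

theorem hkS_ext {k : Type*} [Field k] {q n : ℕ} {A : Type*} [CommRing A] [Algebra k A]
    {f g : HKS k q n →ₐ[k] A} (h : ∀ i, f (hkv k q n i) = g (hkv k q n i)) : f = g := by
  apply Ideal.Quotient.algHom_ext
  apply MvPolynomial.algHom_ext
  exact h

/-- adjoin one more truncated variable -/
abbrev HKN (R : Type*) [CommRing R] (q : ℕ) : Type _ := AdjoinRoot (Polynomial.X ^ q : Polynomial R)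

theorem hkN_root_pow (R : Type*) [CommRing R] (q : ℕ) :
    (AdjoinRoot.root (Polynomial.X ^ q : Polynomial R)) ^ q = 0 := by
  rw [← AdjoinRoot.mk_X, ← map_pow, AdjoinRoot.mk_self]

noncomputable def hkE (k : Type*) [Field k] (q n : ℕ) :
    HKS k q (n + 1) ≃ₐ[k] HKN (HKS k q n) q :=
  AlgEquiv.ofAlgHom
    (hkLift (Fin.snoc (α := fun _ => HKN (HKS k q n) q)
        (fun i => AdjoinRoot.ofAlgHom k _ (hkv k q n i)) (AdjoinRoot.root _)) (by
      intro i
      refine Fin.lastCases ?_ (fun i => ?_) i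
      · simpa using hkN_root_pow _ _
      · rw [Fin.snoc_castSucc, ← map_pow, hkv_pow, map_zero]))
    (AdjoinRoot.liftAlgHom _ (hkLift (fun i => hkv k q (n + 1) i.castSucc) fun i => hkv_pow _ _ _ _)
      (hkv k q (n + 1) (Fin.last n)) (by
        rw [Polynomial.eval₂_X_pow, hkv_pow]))
    (by
      apply AdjoinRoot.algHom_ext'
      · apply hkS_ext
        intro i
        simp
      · simp)
    (by
      apply hkS_ext
      intro i
      refine Fin.lastCases ?_ (fun i => ?_) i
      · simp
      · simp)

theorem hkE_last (k : Type*) [Field k] (q n : ℕ) :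
    hkE k q n (hkv k q (n + 1) (Fin.last n)) = AdjoinRoot.root _ := by
  simp [hkE]

theorem hkE_castSucc (k : Type*) [Field k] (q n : ℕ) (i : Fin n) :
    hkE k q n (hkv k q (n + 1) i.castSucc) = AdjoinRoot.of _ (hkv k q n i) := by
  simp [hkE]

theorem hk_basis (R : Type*) [CommRing R] [Nontrivial R] (f : Polynomial R) (hf : f.Monic) (n : ℕ)
    (hn : f.natDegree = n) :
    ∃ b : Module.Basis (Fin n) R (AdjoinRoot f), ∀ i, b i = AdjoinRoot.root f ^ (i : ℕ) := by
  subst hn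
  refine ⟨(AdjoinRoot.powerBasis' hf).basis, fun i => ?_⟩
  exact (AdjoinRoot.powerBasis' hf).basis_eq_pow i

theorem hk_adj (k R : Type*) [Field k] [CommRing R] [Algebra k R] [Module.Finite k R]
    (f : Polynomial R) (hf : f.Monic) (n : ℕ) (hn : Nontrivial R → f.natDegree = n) :
    Module.Finite k (AdjoinRoot f) ∧
    Module.finrank k (AdjoinRoot f) = n * Module.finrank k R := by
  rcases subsingleton_or_nontrivial R with h | h
  · have : Subsingleton (AdjoinRoot f) := Module.subsingleton R _
    exact ⟨inferInstance, by simp [Module.finrank_zero_of_subsingleton]⟩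
  · obtain ⟨b, -⟩ := hk_basis R f hf n (hn h)
    exact ⟨hk_finite_of_basis k R _ _ b, by simpa using hk_finrank_of_basis k R _ _ b⟩

instance hkS_nontrivial (k : Type*) [Field k] (q n : ℕ) [NeZero q] : Nontrivial (HKS k q n) :=
  (hkLift (k := k) (q := q) (n := n) (A := k) (fun _ => 0)
    (fun _ => zero_pow (NeZero.ne q))).toRingHom.domain_nontrivial

theorem hkS_fin (k : Type*) [Field k] (q n : ℕ) [NeZero q] :
    Module.Finite k (HKS k q n) ∧ Module.finrank k (HKS k q n) = q ^ n := by
  induction n with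
  | zero =>
    have e : HKS k q 0 ≃ₐ[k] k := AlgEquiv.ofAlgHom (hkLift (fun i => i.elim0) (fun i => i.elim0))
      (Algebra.ofId k _) (by ext) (hkS_ext fun i => i.elim0)
    exact ⟨Module.Finite.equiv e.symm.toLinearEquiv, by simp [e.toLinearEquiv.finrank_eq]⟩
  | succ n ih =>
    obtain ⟨h1, h2⟩ := ih
    obtain ⟨h3, h4⟩ := hk_adj k (HKS k q n) (Polynomial.X ^ q) (Polynomial.monic_X_pow q) q
      (fun _ => Polynomial.natDegree_X_pow q)
    exact ⟨Module.Finite.equiv (hkE k q n).symm.toLinearEquiv, by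
      rw [(hkE k q n).toLinearEquiv.finrank_eq, h4, h2, pow_succ']⟩

noncomputable def hkE2 (k : Type*) [Field k] (q n : ℕ) :
    HKS k q (n + 2) ≃ₐ[k] HKN (HKN (HKS k q n) q) q :=
  (hkE k q (n + 1)).trans (AdjoinRoot.mapAlgEquiv (hkE k q n) _ _ (by simp))

theorem hkE2_last (k : Type*) [Field k] (q n : ℕ) :
    hkE2 k q n (hkv k q (n + 2) (Fin.last _)) = AdjoinRoot.root _ := by
  simp [hkE2, hkE_last]

theorem hkE2_mid (k : Type*) [Field k] (q n : ℕ) :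
    hkE2 k q n (hkv k q (n + 2) (Fin.last n).castSucc) = AdjoinRoot.of _ (AdjoinRoot.root _) := by
  simp [hkE2, hkE_castSucc, hkE_last]

theorem hkE2_old (k : Type*) [Field k] (q n : ℕ) (i : Fin n) :
    hkE2 k q n (hkv k q (n + 2) i.castSucc.castSucc) =
      algebraMap (HKS k q n) _ (hkv k q n i) := by
  simp [hkE2, hkE_castSucc]
  rfl

theorem hk_basis2 (R : Type*) [CommRing R] [Nontrivial R] (Q : ℕ) (hQ : 0 < Q) :
    ∃ b : Module.Basis ((Fin Q × Fin Q) × Fin 2 × Fin 2) R (HKN (HKN R (2 * Q)) (2 * Q)),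
      ∀ i j s t, b ((i, j), s, t) =
        (AdjoinRoot.of _ (AdjoinRoot.root _)) ^ ((i : ℕ) + Q * s) *
          (AdjoinRoot.root _) ^ ((j : ℕ) + Q * t) := by
  obtain ⟨b, hb⟩ := hk_basis R (Polynomial.X ^ (2 * Q)) (Polynomial.monic_X_pow _) (2 * Q)
    (Polynomial.natDegree_X_pow _)
  have : Nontrivial (HKN R (2 * Q)) := ⟨0, b ⟨0, by omega⟩, (b.ne_zero _).symm⟩
  obtain ⟨c, hc⟩ := hk_basis (HKN R (2 * Q)) (Polynomial.X ^ (2 * Q))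
    (Polynomial.monic_X_pow _) (2 * Q) (Polynomial.natDegree_X_pow _)
  let e : ((Fin Q × Fin Q) × Fin 2 × Fin 2) ≃ Fin (2 * Q) × Fin (2 * Q) :=
    ((Equiv.prodProdProdComm _ _ _ _).trans
      (((Equiv.prodComm _ _).trans finProdFinEquiv).prodCongr
        ((Equiv.prodComm _ _).trans finProdFinEquiv)))
  refine ⟨(b.smulTower c).reindex e.symm, fun i j s t => ?_⟩
  rw [Module.Basis.reindex_apply, Module.Basis.smulTower_apply, hb, hc, Algebra.smul_def,
    AdjoinRoot.algebraMap_eq, map_pow]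
  rfl

/-- the element -/
noncomputable def hkh (k : Type*) [Field k] (q Q m : ℕ) : HKS k q (2 * m) :=
  ∑ i : Fin m, hkv k q (2 * m) ⟨2 * i, by omega⟩ ^ Q * hkv k q (2 * m) ⟨2 * i + 1, by omega⟩ ^ Q

theorem hk_aux {k A B R : Type*} [CommRing k] [CommRing A] [CommRing B] [CommRing R] [Algebra k A]
    [Algebra k B] (φ : A ≃ₐ[k] B) (ψ : R →+* B)
    {m Q : ℕ} (x y : Fin (m + 1) → A) (x' y' : Fin m → R) (u v : B)
    (hx : ∀ i, φ (x i.castSucc) = ψ (x' i)) (hy : ∀ i, φ (y i.castSucc) = ψ (y' i))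
    (hu : φ (x (Fin.last m)) = u) (hv : φ (y (Fin.last m)) = v) :
    φ (∑ i, x i ^ Q * y i ^ Q) = ψ (∑ i, x' i ^ Q * y' i ^ Q) + u ^ Q * v ^ Q := by
  rw [Fin.sum_univ_castSucc]
  simp [hx, hy, hu, hv]

theorem hkh_succ (k : Type*) [Field k] (q Q m : ℕ) :
    hkE2 k q (2 * m) (hkh k q Q (m + 1)) = algebraMap (HKS k q (2 * m)) _ (hkh k q Q m) +
      (AdjoinRoot.of _ (AdjoinRoot.root _)) ^ Q * (AdjoinRoot.root _) ^ Q :=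
  hk_aux (hkE2 k q (2 * m)) (algebraMap (HKS k q (2 * m)) _)
    (fun i => hkv k q (2 * (m + 1)) ⟨2 * i, by omega⟩)
    (fun i => hkv k q (2 * (m + 1)) ⟨2 * i + 1, by omega⟩)
    (fun i => hkv k q (2 * m) ⟨2 * i, by omega⟩)
    (fun i => hkv k q (2 * m) ⟨2 * i + 1, by omega⟩) _ _
    (fun i => hkE2_old k q (2 * m) ⟨2 * i, by omega⟩)
    (fun i => hkE2_old k q (2 * m) ⟨2 * i + 1, by omega⟩)
    (hkE2_mid k q (2 * m)) (hkE2_last k q (2 * m))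

theorem hk_step2 (k R : Type*) [Field k] [CommRing R] [Nontrivial R] [Algebra k R]
    [Module.Finite k R] (Q : ℕ) (hQ : 0 < Q) (h : R) (hh : h * h = 0) :
    Module.finrank k (HKN (HKN R (2 * Q)) (2 * Q) ⧸ Ideal.span {algebraMap R
      (HKN (HKN R (2 * Q)) (2 * Q)) h +
        (AdjoinRoot.of _ (AdjoinRoot.root _)) ^ Q * (AdjoinRoot.root _) ^ Q}) =
      Q * Q * (Module.finrank k R + 2 * Module.finrank k (R ⧸ Ideal.span {h})) := by
  obtain ⟨b, hb⟩ := hk_basis2 R Q hQ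
  have hx : (AdjoinRoot.of (Polynomial.X ^ (2 * Q) : Polynomial (HKN R (2 * Q)))
      (AdjoinRoot.root _)) ^ (2 * Q) = 0 := by
    rw [← map_pow, hkN_root_pow, map_zero]
  have hy := hkN_root_pow (HKN R (2 * Q)) (2 * Q)
  generalize AdjoinRoot.of (Polynomial.X ^ (2 * Q) : Polynomial (HKN R (2 * Q)))
      (AdjoinRoot.root _) = x at *
  generalize AdjoinRoot.root (Polynomial.X ^ (2 * Q) : Polynomial (HKN R (2 * Q))) = y at *
  rw [hk_step k R _ (Fin Q × Fin Q) h hh _ b]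
  · simp
  · rintro ⟨i, j⟩
    rw [hb, hb]
    simp only [Fin.val_one, Fin.val_zero]
    ring
  · rintro ⟨i, j⟩
    rw [hb]
    simp only [Fin.val_one, Fin.val_zero]
    linear_combination x ^ (Q + i) * y ^ (j : ℕ) * hy
  · rintro ⟨i, j⟩
    rw [hb]
    simp only [Fin.val_one, Fin.val_zero]
    linear_combination y ^ (Q + j) * x ^ (i : ℕ) * hx
  · rintro ⟨i, j⟩
    rw [hb]
    simp only [Fin.val_one]
    linear_combination x ^ (Q + i + Q) * y ^ (j : ℕ) * hy

theorem hkh_sq (k : Type*) [Field k] [CharP k 2] (Q m : ℕ) [NeZero Q] :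
    hkh k (2 * Q) Q m * hkh k (2 * Q) Q m = 0 := by
  have : CharP (HKS k (2 * Q) (2 * m)) 2 := charP_of_injective_algebraMap' k 2
  have : ExpChar (HKS k (2 * Q) (2 * m)) 2 := ExpChar.prime Nat.prime_two
  rw [← sq, hkh, sum_pow_char]
  refine Finset.sum_eq_zero fun i _ => ?_
  rw [mul_pow, ← pow_mul, mul_comm Q 2, hkv_pow, zero_mul]

theorem hk_step3 {k A B : Type*} [Field k] [CommRing A] [CommRing B] [Algebra k A]
    [Algebra k B] (φ : A ≃ₐ[k] B) (a : A) (b : B) (h : φ a = b) :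
    Module.finrank k (A ⧸ Ideal.span {a}) = Module.finrank k (B ⧸ Ideal.span {b}) := by
  have hE : Ideal.span {b} = Ideal.map φ (Ideal.span {a}) := by
    rw [Ideal.map_span, Set.image_singleton, h]
  exact (Ideal.quotientEquivAlg _ _ φ hE).toLinearEquiv.finrank_eq

theorem hkT (k : Type*) [Field k] [CharP k 2] (Q m : ℕ) [NeZero Q] :
    2 * Module.finrank k (HKS k (2 * Q) (2 * m) ⧸ Ideal.span {hkh k (2 * Q) Q m}) =
      Q ^ (2 * m) * (4 ^ m + 2 ^ m) := by
  induction m with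
  | zero =>
    have : Ideal.span {hkh k (2 * Q) Q 0} = ⊥ := by simp [hkh]
    rw [this, (AlgEquiv.quotientBot k (HKS k (2 * Q) (2 * 0))).toLinearEquiv.finrank_eq,
      (hkS_fin k (2 * Q) (2 * 0)).2]
    simp
  | succ m ih =>
    obtain ⟨f1, f2⟩ := hkS_fin k (2 * Q) (2 * m)
    have h1 := hk_step3 (hkE2 k (2 * Q) (2 * m)) _ _ (hkh_succ k (2 * Q) Q m)
    have h2 := hk_step2 k _ Q (NeZero.pos Q) (hkh k (2 * Q) Q m) (hkh_sq k Q m)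
    rw [f2] at h2
    refine (congrArg (2 * ·) (h1.trans h2)).trans ?_
    clear h1 h2
    have : (4 : ℕ) ^ m = 2 ^ (2 * m) := by rw [pow_mul]; norm_num
    generalize Module.finrank k (HKS k (2 * Q) (2 * m) ⧸ Ideal.span {hkh k (2 * Q) Q m}) = N at *
    calc _ = Q * Q * (2 * (2 * Q) ^ (2 * m) + 2 * (2 * N)) := by ring
      _ = _ := by
        rw [ih, mul_pow, ← this]
        ring

/-- adjoin `w` with `w ^ q = 0` and `z` with `z ^ 2 = g + w ^ 3`. -/
abbrev HKZ (T : Type*) [CommRing T] (q : ℕ) (g : T) : Type _ :=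
  AdjoinRoot (Polynomial.X ^ 2 - Polynomial.C (AdjoinRoot.of _ g + AdjoinRoot.root _ ^ 3) :
    Polynomial (HKN T q))

noncomputable def hkz (T : Type*) [CommRing T] (q : ℕ) (g : T) : HKZ T q g := AdjoinRoot.root _
noncomputable def hkw (T : Type*) [CommRing T] (q : ℕ) (g : T) : HKZ T q g :=
  AdjoinRoot.of _ (AdjoinRoot.root _)
noncomputable def hkt (k T : Type*) [CommRing k] [CommRing T] [Algebra k T] (q : ℕ) (g : T) :
    T →ₐ[k] HKZ T q g :=
  (AdjoinRoot.ofAlgHom k _).comp (AdjoinRoot.ofAlgHom k _)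

theorem hkw_pow (T : Type*) [CommRing T] (q : ℕ) (g : T) : hkw T q g ^ q = 0 := by
  rw [hkw, ← map_pow, hkN_root_pow, map_zero]

theorem hkz_sq (k T : Type*) [CommRing k] [CommRing T] [Algebra k T] (q : ℕ) (g : T) :
    hkz T q g ^ 2 = hkt k T q g g + hkw T q g ^ 3 := by
  have := AdjoinRoot.eval₂_root
    (Polynomial.X ^ 2 - Polynomial.C (AdjoinRoot.of _ g + AdjoinRoot.root _ ^ 3) :
    Polynomial (HKN T q))
  rw [Polynomial.eval₂_sub, Polynomial.eval₂_X_pow, Polynomial.eval₂_C,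
    sub_eq_zero] at this
  exact this.trans ((map_add (AdjoinRoot.of _) _ _).trans
    (congrArg (_ + ·) (map_pow (AdjoinRoot.of _) _ _)))

noncomputable def hkZlift {k T H : Type*} [CommRing k] [CommRing T] [Algebra k T]
    [CommRing H] [Algebra k H] (q : ℕ) (g : T)
    (φ : T →ₐ[k] H) (z w : H) (hw : w ^ q = 0) (hz : z ^ 2 = φ g + w ^ 3) : HKZ T q g →ₐ[k] H :=
  AdjoinRoot.liftAlgHom _ (AdjoinRoot.liftAlgHom _ φ w (by simp [hw])) z (by
    rw [Polynomial.eval₂_sub, Polynomial.eval₂_X_pow, Polynomial.eval₂_C, hz]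
    simp)

section
variable {k T H : Type*} [CommRing k] [CommRing T] [Algebra k T]
    [CommRing H] [Algebra k H] (q : ℕ) (g : T)
    (φ : T →ₐ[k] H) (z w : H) (hw : w ^ q = 0) (hz : z ^ 2 = φ g + w ^ 3)

theorem hkZlift_z : hkZlift q g φ z w hw hz (hkz T q g) = z := by simp [hkZlift, hkz]
theorem hkZlift_w : hkZlift q g φ z w hw hz (hkw T q g) = w := by simp [hkZlift, hkw]
theorem hkZlift_t (t : T) : hkZlift q g φ z w hw hz (hkt k T q g t) = φ t := by
  simp [hkZlift, hkt]

theorem hkZ_ext {f f' : HKZ T q g →ₐ[k] H} (h1 : f.comp (hkt k T q g) = f'.comp (hkt k T q g))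
    (h2 : f (hkz T q g) = f' (hkz T q g)) (h3 : f (hkw T q g) = f' (hkw T q g)) : f = f' := by
  apply AdjoinRoot.algHom_ext'
  · apply AdjoinRoot.algHom_ext'
    · exact h1
    · exact h3
  · exact h2
end

theorem hkZ_finrank (k T : Type*) [Field k] [CommRing T] [Algebra k T] [Module.Finite k T]
    (q : ℕ) (g : T) : Module.finrank k (HKZ T q g) = 2 * (q * Module.finrank k T) := by
  obtain ⟨h3, h4⟩ := hk_adj k T (Polynomial.X ^ q) (Polynomial.monic_X_pow q) q
      (fun _ => Polynomial.natDegree_X_pow q)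
  rw [← h4]
  exact (hk_adj k (HKN T q) _ (Polynomial.monic_X_pow_sub_C _ two_ne_zero) 2
    (fun _ => Polynomial.natDegree_X_pow_sub_C)).2

theorem hk_sq_eq {A : Type*} [CommRing A] (h2 : (2 : A) = 0) (a : ℕ) (z w g : A)
    (hz : z ^ 2 = g + w ^ 3) (hw : w ^ (2 * 2 ^ a) = 0) : z ^ (2 * 2 ^ a) = g ^ (2 ^ a) := by
  rcases subsingleton_or_nontrivial A with h | h
  · exact Subsingleton.elim _ _
  have : CharP A 2 := CharTwo.of_one_ne_zero_of_two_eq_zero one_ne_zero h2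
  have : Fact (Nat.Prime 2) := ⟨Nat.prime_two⟩
  rw [pow_mul, hz, add_pow_char_pow, ← pow_mul,
    show 3 * 2 ^ a = 2 * 2 ^ a + 2 ^ a by ring, pow_add, hw, zero_mul, add_zero]

theorem hk_sum_pow {A : Type*} [CommRing A] (h2 : (2 : A) = 0) (a : ℕ) {m : ℕ} (x y : Fin m → A) :
    (∑ i, x i * y i) ^ (2 ^ a) = ∑ i, x i ^ (2 ^ a) * y i ^ (2 ^ a) := by
  rcases subsingleton_or_nontrivial A with h | h
  · exact Subsingleton.elim _ _
  have : CharP A 2 := CharTwo.of_one_ne_zero_of_two_eq_zero one_ne_zero h2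
  have : ExpChar A 2 := ExpChar.prime Nat.prime_two
  simp [sum_pow_char_pow, mul_pow]

theorem hk_two {k A : Type*} [Field k] [CharP k 2] [CommRing A] [Algebra k A] : (2 : A) = 0 := by
  have : (2 : k) = 0 := CharTwo.two_eq_zero
  rw [← map_ofNat (algebraMap k A) 2, this, map_zero]

/-- the quotient of the truncated ring -/
abbrev HKT (k : Type*) [Field k] (q Q m : ℕ) : Type _ :=
  HKS k q (2 * m) ⧸ Ideal.span {hkh k q Q m}

noncomputable def hktv (k : Type*) [Field k] (q Q m : ℕ) (i : Fin (2 * m)) : HKT k q Q m :=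
  Ideal.Quotient.mkₐ k _ (hkv k q (2 * m) i)

theorem hktv_pow (k : Type*) [Field k] (q Q m : ℕ) (i : Fin (2 * m)) :
    hktv k q Q m i ^ q = 0 := by
  rw [hktv, ← map_pow, hkv_pow, map_zero]

theorem hktv_sum (k : Type*) [Field k] (q Q m : ℕ) :
    ∑ i : Fin m, hktv k q Q m ⟨2 * i, by omega⟩ ^ Q * hktv k q Q m ⟨2 * i + 1, by omega⟩ ^ Q
      = 0 := by
  have : Ideal.Quotient.mkₐ k (Ideal.span {hkh k q Q m}) (hkh k q Q m) = 0 :=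
    Ideal.Quotient.eq_zero_iff_mem.2 (Ideal.mem_span_singleton_self _)
  conv at this =>
    lhs; arg 2; rw [hkh]
  rw [map_sum] at this
  simp only [map_mul, map_pow] at this
  exact this

noncomputable def hkTlift {k : Type*} [Field k] {q Q m : ℕ} {A : Type*} [CommRing A] [Algebra k A]
    (v : Fin (2 * m) → A) (hv : ∀ i, v i ^ q = 0)
    (hs : ∑ i : Fin m, v ⟨2 * i, by omega⟩ ^ Q * v ⟨2 * i + 1, by omega⟩ ^ Q = 0) :
    HKT k q Q m →ₐ[k] A :=
  Ideal.Quotient.liftₐ _ (hkLift v hv) (by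
    intro a ha
    obtain ⟨b, rfl⟩ := Ideal.mem_span_singleton'.1 ha
    rw [map_mul, hkh, map_sum]
    simp [hs])

theorem hkTlift_v {k : Type*} [Field k] {q Q m : ℕ} {A : Type*} [CommRing A] [Algebra k A]
    (v : Fin (2 * m) → A) (hv : ∀ i, v i ^ q = 0) (hs) (i : Fin (2 * m)) :
    hkTlift (k := k) (Q := Q) v hv hs (hktv k q Q m i) = v i :=
  hkLift_v v hv i

theorem hkT_ext {k : Type*} [Field k] {q Q m : ℕ} {A : Type*} [CommRing A] [Algebra k A]
    {f g : HKT k q Q m →ₐ[k] A} (h : ∀ i, f (hktv k q Q m i) = g (hktv k q Q m i)) : f = g := by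
  apply Ideal.Quotient.algHom_ext
  exact hkS_ext h

theorem hk_hom_sum {k A B : Type*} [CommRing k] [CommRing A] [CommRing B] [Algebra k A]
    [Algebra k B] (φ : A →ₐ[k] B) {m : ℕ} (x y : Fin m → A) :
    φ (∑ i, x i * y i) = ∑ i, φ (x i) * φ (y i) := by
  simp

theorem hk_aeval {k B : Type*} [CommRing k] [CommRing B] [Algebra k B] {m : ℕ}
    (v : Fin (2 * m + 2) → B) :
    aeval v ((∑ i : Fin m,
              (X (⟨2 * i, by omega⟩ : Fin (2 * m + 2)) : MvPolynomial (Fin (2 * m + 2)) k) *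
                X (⟨2 * i + 1, by omega⟩ : Fin (2 * m + 2))) +
            X (⟨2 * m, by omega⟩ : Fin (2 * m + 2)) ^ 2 +
            X (⟨2 * m + 1, by omega⟩ : Fin (2 * m + 2)) ^ 3) =
    (∑ i : Fin m, v ⟨2 * i, by omega⟩ * v ⟨2 * i + 1, by omega⟩) +
      v ⟨2 * m, by omega⟩ ^ 2 + v ⟨2 * m + 1, by omega⟩ ^ 3 := by
  simp

/-- universal property recognition of the Hilbert-Kunz ring -/
theorem hk_main.{u} (k : Type u) [Field k] [CharP k 2] (m a : ℕ)
    (T : Type u) [CommRing T] [Algebra k T] (tv : Fin (2 * m) → T)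
    (htp : ∀ i, tv i ^ (2 * 2 ^ a) = 0)
    (hts : ∑ i : Fin m, tv ⟨2 * i, by omega⟩ ^ (2 ^ a) * tv ⟨2 * i + 1, by omega⟩ ^ (2 ^ a) = 0)
    (htl : ∀ (A : Type u) [CommRing A] [Algebra k A] (v : Fin (2 * m) → A)
      (_ : ∀ i, v i ^ (2 * 2 ^ a) = 0)
      (_ : ∑ i : Fin m, v ⟨2 * i, by omega⟩ ^ (2 ^ a) * v ⟨2 * i + 1, by omega⟩ ^ (2 ^ a) = 0),
      ∃ φ : T →ₐ[k] A, ∀ i, φ (tv i) = v i)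
    (hte : ∀ (A : Type u) [CommRing A] [Algebra k A] (f g : T →ₐ[k] A)
      (_ : ∀ i, f (tv i) = g (tv i)), f = g)
    (I : Ideal (MvPolynomial (Fin (2 * m + 2)) k))
    (hI : I = Ideal.span
        (Set.range (fun i : Fin (2 * m + 2) => (X i : MvPolynomial (Fin (2 * m + 2)) k) ^ (2 * 2 ^ a)) ∪
        {((∑ i : Fin m,
              (X (⟨2 * i, by omega⟩ : Fin (2 * m + 2)) : MvPolynomial (Fin (2 * m + 2)) k) *
                X (⟨2 * i + 1, by omega⟩ : Fin (2 * m + 2))) +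
            X (⟨2 * m, by omega⟩ : Fin (2 * m + 2)) ^ 2 +
            X (⟨2 * m + 1, by omega⟩ : Fin (2 * m + 2)) ^ 3)})) :
    ∃ g : T,
      Nonempty ((MvPolynomial (Fin (2 * m + 2)) k ⧸ I) ≃ₐ[k]
        HKZ T (2 * 2 ^ a) g) := by
  obtain ⟨g, hg⟩ : ∃ g : T, g = ∑ i : Fin m,
    tv ⟨2 * i, by omega⟩ * tv ⟨2 * i + 1, by omega⟩ :=
    ⟨_, rfl⟩
  have hgQ : g ^ (2 ^ a) = 0 := by
    rw [hg]
    exact (hk_sum_pow (hk_two (k := k)) a (fun i => tv ⟨2 * i, by omega⟩)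
      (fun i => tv ⟨2 * i + 1, by omega⟩)).trans hts
  refine ⟨g, ?_⟩
  -- the generators of the Hilbert-Kunz ring
  let y : Fin (2 * m + 2) → (MvPolynomial (Fin (2 * m + 2)) k ⧸ I) :=
    fun i => Ideal.Quotient.mkₐ k I (X i)
  have hy : ∀ i, y i ^ (2 * 2 ^ a) = 0 := fun i => by
    simp only [y]
    rw [← map_pow]
    refine Ideal.Quotient.eq_zero_iff_mem.2 ?_
    rw [hI]
    exact Ideal.subset_span (Or.inl ⟨i, rfl⟩)
  have hyf : (∑ i : Fin m, y ⟨2 * i, by omega⟩ * y ⟨2 * i + 1, by omega⟩) +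
      y ⟨2 * m, by omega⟩ ^ 2 + y ⟨2 * m + 1, by omega⟩ ^ 3 = 0 := by
    have : Ideal.Quotient.mkₐ k I ((∑ i : Fin m,
              (X (⟨2 * i, by omega⟩ : Fin (2 * m + 2)) : MvPolynomial (Fin (2 * m + 2)) k) *
                X (⟨2 * i + 1, by omega⟩ : Fin (2 * m + 2))) +
            X (⟨2 * m, by omega⟩ : Fin (2 * m + 2)) ^ 2 +
            X (⟨2 * m + 1, by omega⟩ : Fin (2 * m + 2)) ^ 3) = 0 := by
      refine Ideal.Quotient.eq_zero_iff_mem.2 ?_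
      rw [hI]
      exact Ideal.subset_span (Or.inr rfl)
    rw [map_add, map_add, map_sum, map_pow, map_pow] at this
    simpa only [map_mul] using this
  have hext : ∀ {B : Type _} [CommRing B] [Algebra k B]
      {f f' : (MvPolynomial (Fin (2 * m + 2)) k ⧸ I) →ₐ[k] B}, (∀ i, f (y i) = f' (y i)) → f = f' := by
    intro B _ _ f f' h
    apply Ideal.Quotient.algHom_ext
    apply MvPolynomial.algHom_ext
    exact h
  have h2H : (2 : MvPolynomial (Fin (2 * m + 2)) k ⧸ I) = 0 := hk_two (k := k)
  have hyz : y ⟨2 * m, by omega⟩ ^ 2 = (∑ i : Fin m, y ⟨2 * i, by omega⟩ * y ⟨2 * i + 1, by omega⟩)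
      + y ⟨2 * m + 1, by omega⟩ ^ 3 := by
    linear_combination hyf - ((∑ i : Fin m, y ⟨2 * i, by omega⟩ * y ⟨2 * i + 1, by omega⟩)
      + y ⟨2 * m + 1, by omega⟩ ^ 3) * h2H
  have hys := hk_sq_eq h2H a _ _ _ hyz (hy _)
  rw [hy] at hys
  have hys2 := hys.trans (hk_sum_pow h2H a (fun i : Fin m => y ⟨2 * i, by omega⟩)
    (fun i => y ⟨2 * i + 1, by omega⟩))
  obtain ⟨β0, hβ0⟩ := htl _ (fun i => y i.castSucc.castSucc) (fun i => hy _) hys2.symm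
  have hβg : β0 g = ∑ i : Fin m, y ⟨2 * i, by omega⟩ * y ⟨2 * i + 1, by omega⟩ := by
    rw [hg, map_sum]
    simp only [map_mul, hβ0]
    rfl
  have hzz : y ⟨2 * m, by omega⟩ ^ 2 = β0 g + y ⟨2 * m + 1, by omega⟩ ^ 3 := by rw [hβg, hyz]
  -- the map in the other direction
  let v : Fin (2 * m + 2) → HKZ T (2 * 2 ^ a) g :=
    Fin.snoc (α := fun _ => HKZ T (2 * 2 ^ a) g)
      (Fin.snoc (α := fun _ => HKZ T (2 * 2 ^ a) g)
      (fun i => hkt k _ _ g (tv i)) (hkz _ _ _)) (hkw _ _ _)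
  have v0 : ∀ i : Fin (2 * m), v i.castSucc.castSucc = hkt k _ _ g (tv i) :=
    fun i => by simp only [v, Fin.snoc_castSucc]
  have v1 : v (Fin.last (2 * m)).castSucc = hkz _ _ _ := by
    simp only [v, Fin.snoc_castSucc, Fin.snoc_last]
  have v2 : v (Fin.last (2 * m + 1)) = hkw _ _ _ := by
    simp only [v, Fin.snoc_last]
  have h2Z : (2 : HKZ T (2 * 2 ^ a) g) = 0 := hk_two (k := k)
  have hzs := hkz_sq k T (2 * 2 ^ a) g
  have hws := hkw_pow T (2 * 2 ^ a) g
  have hv : ∀ i, v i ^ (2 * 2 ^ a) = 0 := by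
    intro i
    refine Fin.lastCases ?_ (fun i => ?_) i
    · rw [v2, hws]
    · refine Fin.lastCases ?_ (fun i => ?_) i
      · rw [v1, hk_sq_eq h2Z a _ _ _ hzs hws, ← map_pow, hgQ, map_zero]
      · rw [v0, ← map_pow, htp, map_zero]
  have hvf : (∑ i : Fin m, v ⟨2 * i, by omega⟩ * v ⟨2 * i + 1, by omega⟩) +
      v ⟨2 * m, by omega⟩ ^ 2 + v ⟨2 * m + 1, by omega⟩ ^ 3 = 0 := by
    have e1 : v ⟨2 * m, by omega⟩ = hkz _ _ _ := v1
    have e2 : v ⟨2 * m + 1, by omega⟩ = hkw _ _ _ := v2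
    have e3 : (∑ i : Fin m, v ⟨2 * i, by omega⟩ * v ⟨2 * i + 1, by omega⟩) = hkt k _ _ g g := by
      refine Eq.trans ?_ ((congrArg (hkt k _ _ g) hg).trans (hk_hom_sum (hkt k _ _ g) _ _)).symm
      refine Finset.sum_congr rfl fun i _ => ?_
      rw [← v0, ← v0]
      rfl
    rw [e1, e2, e3, hzs]
    linear_combination (hkt k _ _ g g + hkw _ _ _ ^ 3) * h2Z
  let α : (MvPolynomial (Fin (2 * m + 2)) k ⧸ I) →ₐ[k]
      HKZ T (2 * 2 ^ a) g :=
    Ideal.Quotient.liftₐ I (aeval v) (by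
      intro b hb
      have : I ≤ RingHom.ker (aeval v : MvPolynomial (Fin (2 * m + 2)) k →ₐ[k] _) := by
        rw [hI, Ideal.span_le]
        rintro _ (⟨i, rfl⟩ | rfl)
        · simp [hv]
        · exact (hk_aeval v).trans hvf
      exact this hb)
  have hα : ∀ i, α (y i) = v i := fun i => aeval_X v i
  let β := hkZlift (2 * 2 ^ a) g β0 _ _ (hy _) hzz
  have βz : β (hkz _ _ _) = y (Fin.last (2 * m)).castSucc := hkZlift_z _ _ _ _ _ _ _
  have βw : β (hkw _ _ _) = y (Fin.last (2 * m + 1)) := hkZlift_w _ _ _ _ _ _ _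
  have βt : ∀ t, β (hkt k _ _ _ t) = β0 t := hkZlift_t _ _ _ _ _ _ _
  refine ⟨AlgEquiv.ofAlgHom α β ?_ ?_⟩
  · apply hkZ_ext
    · apply hte
      intro i
      simp only [AlgHom.comp_apply, βt, hβ0, hα, v0, AlgHom.id_apply]
    · simp only [AlgHom.comp_apply, βz, hα, v1, AlgHom.id_apply]
    · simp only [AlgHom.comp_apply, βw, hα, v2, AlgHom.id_apply]
  · apply hext
    intro i
    rw [AlgHom.comp_apply, hα, AlgHom.id_apply]
    refine Fin.lastCases ?_ (fun i => ?_) i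
    · rw [v2, βw]
    · refine Fin.lastCases ?_ (fun i => ?_) i
      · rw [v1, βz]
      · rw [v0, βt, hβ0]

theorem HK_function_A2_char_two_odd (k : Type*) [Field k] [CharP k 2]
    (m : ℕ) (e : ℕ) (he : 1 ≤ e) :
    2 ^ m *
        HKfun k (2 * m + 2) 2 e
          ((∑ i : Fin m,
              (X (⟨2 * i, by omega⟩ : Fin (2 * m + 2)) : MvPolynomial (Fin (2 * m + 2)) k) *
                X (⟨2 * i + 1, by omega⟩ : Fin (2 * m + 2))) +
            X (⟨2 * m, by omega⟩ : Fin (2 * m + 2)) ^ 2 +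
            X (⟨2 * m + 1, by omega⟩ : Fin (2 * m + 2)) ^ 3) =
      (2 ^ m + 1) * 2 ^ ((2 * m + 1) * e) := by
  obtain ⟨a, rfl⟩ : ∃ a, e = a + 1 := ⟨e - 1, by omega⟩
  rw [HKfun]
  obtain ⟨g, ⟨E⟩⟩ := hk_main k m a (HKT k (2 * 2 ^ a) (2 ^ a) m) (hktv k _ _ m)
    (hktv_pow k _ _ m) (hktv_sum k _ _ m)
    (fun A _ _ v h1 h2 => ⟨hkTlift v h1 h2, hkTlift_v v h1 h2⟩)
    (fun A _ _ f g h => hkT_ext h) _ rfl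
  have hf := (hkS_fin k (2 * 2 ^ a) (2 * m)).1
  have hfT : Module.Finite k (HKT k (2 * 2 ^ a) (2 ^ a) m) :=
    Module.Finite.of_surjective (Ideal.Quotient.mkₐ k (Ideal.span {hkh k (2 * 2 ^ a) (2 ^ a) m})).toLinearMap
      (Ideal.Quotient.mkₐ_surjective k _)
  have h1 := E.toLinearEquiv.finrank_eq
  have h2 := hkZ_finrank k (HKT k (2 * 2 ^ a) (2 ^ a) m) (2 * 2 ^ a) g
  have h3 := hkT k (2 ^ a) m
  have h4 := h1.trans h2
  have hp : (2 : ℕ) ^ (a + 1) = 2 * 2 ^ a := by ring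
  rw [hp]
  refine (congrArg (2 ^ m * ·) h4).trans ?_
  clear h1 h2 h4 E
  generalize Module.finrank k (HKT k (2 * 2 ^ a) (2 ^ a) m) = N at *
  have h44 : (4 : ℕ) ^ m = 2 ^ m * 2 ^ m := by rw [← mul_pow]; norm_num
  calc _ = 2 ^ m * (2 * 2 ^ a) * (2 * N) := by ring
    _ = _ := by
      rw [h3, h44]
      ring
end
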